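/- arXiv:2112.14383 — 2 statements merged into one kernel-verified Lean document; each statement's English description precedes it below -/
import Mathlib

section
/- Let W = {A ∈ ℝ : A > 1 and ⌊A^{3^{k!}}⌋ is a prime number for every k ≥ 1}. Then the left sub-boundary ∂_L W is algebraically independent over ℚ, i.e., every nonempty finite subset {A_1,…,A_r} ⊆ ∂_L W satisfies P(A_1,…,A_r) ≠ 0 for every nonzero polynomial P ∈ ℚ[x_1,…,x_r]. -/
/-- The set `W` of `A > 1` such that `⌊A ^ (3 ^ (k !))⌋` is prime for every `k ≥ 1`. -/
def Wpow : Set ℝ :=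
  {A : ℝ | 1 < A ∧ ∀ k : ℕ, 1 ≤ k → Prime ⌊A ^ (3 ^ Nat.factorial k)⌋}

/-- `U` is a connected component of `S` (as a subset of `ℝ`). -/
def IsCCompOf (U S : Set ℝ) : Prop := ∃ x ∈ S, U = connectedComponentIn S x

/-- The left sub-boundary of `X ⊆ ℝ`: suprema of the components of `ℝ \ X`
that are bounded above. -/
def subL (X : Set ℝ) : Set ℝ :=
  {A : ℝ | ∃ U : Set ℝ, IsCCompOf U Xᶜ ∧ BddAbove U ∧ A = sSup U}

namespace MillsInd
open Complex

noncomputable def Zf : ℂ → ℂ := Function.update (fun s => (s-1)*riemannZeta s) 1 1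

lemma Zf_diff : Differentiable ℂ Zf := by
  have h := DirichletCharacter.differentiable_LFunctionTrivChar₁ 1
  have e : DirichletCharacter.LFunctionTrivChar₁ 1 = Zf := by
    unfold DirichletCharacter.LFunctionTrivChar₁ Zf
    simp [DirichletCharacter.LFunctionTrivChar, DirichletCharacter.LFunction_modOne_eq]
  rwa [e] at h

lemma Zf_one : Zf 1 = 1 := by simp [Zf]

lemma Zf_of_ne {s : ℂ} (h : s ≠ 1) : Zf s = (s-1)*riemannZeta s := by simp [Zf, h]

noncomputable def gt (n : ℕ) (s : ℂ) : ℂ :=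
  (s-1)*((n:ℝ):ℂ)^(-s) + (((n:ℝ)+1:ℝ):ℂ)^(1-s) - ((n:ℝ):ℂ)^(1-s)

lemma gt_inner {a x : ℝ} (ha : 0 < a) (hx : a ≤ x) {s : ℂ} (hs : 0 < s.re) :
    ‖(x:ℂ)^(-s) - (a:ℂ)^(-s)‖ ≤ ‖s‖ * a^(-s.re-1) * (x - a) := by
  have hs0 : s ≠ 0 := by rintro rfl; simp at hs
  refine norm_image_sub_le_of_norm_deriv_le_segment' (f := fun y : ℝ => (y:ℂ)^(-s))
    (f' := fun y : ℝ => (-s) * (y:ℂ)^(-s-1)) (a := a) (b := x) ?_ ?_ x ⟨hx, le_rfl⟩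
  · intro y hy
    exact (hasDerivAt_ofReal_cpow_const (by have := hy.1; linarith) (neg_ne_zero.mpr hs0)).hasDerivWithinAt
  · intro y hy
    have hy0 : 0 < y := by have := hy.1; linarith
    rw [norm_mul, norm_neg, norm_cpow_eq_rpow_re_of_pos hy0]
    simp only [sub_re, neg_re, one_re]
    exact mul_le_mul_of_nonneg_left (Real.rpow_le_rpow_of_nonpos ha hy.1 (by linarith)) (norm_nonneg _)

lemma gt_bound {n : ℕ} (hn : 1 ≤ n) {s : ℂ} (hs : 0 < s.re) :
    ‖gt n s‖ ≤ ‖s‖ * ‖s-1‖ * (n:ℝ)^(-s.re-1) := by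
  by_cases h1 : s = 1
  · subst h1; simp [gt]
  have hn0 : (0:ℝ) < n := by exact_mod_cast hn
  have h1' : 1 - s ≠ 0 := sub_ne_zero.mpr (Ne.symm h1)
  have key := norm_image_sub_le_of_norm_deriv_le_segment'
    (f := fun y : ℝ => (y:ℂ)^(1-s) + (s-1)*((n:ℝ):ℂ)^(-s) * y)
    (f' := fun y : ℝ => (1-s)*(y:ℂ)^(1-s-1) + (s-1)*((n:ℝ):ℂ)^(-s) * 1) (a := n) (b := n+1)
    (C := ‖s‖ * ‖s-1‖ * (n:ℝ)^(-s.re-1)) ?_ ?_ (n+1) ⟨by linarith, le_rfl⟩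
  · have e : gt n s = (fun y : ℝ => (y:ℂ)^(1-s) + (s-1)*((n:ℝ):ℂ)^(-s) * y) (n+1) -
      (fun y : ℝ => (y:ℂ)^(1-s) + (s-1)*((n:ℝ):ℂ)^(-s) * y) n := by
      simp only [gt]; push_cast; ring
    rw [e]; refine key.trans (le_of_eq ?_); ring
  · intro y hy
    have h := (hasDerivAt_ofReal_cpow_const (x := y) (by have := hy.1; linarith) h1')
    exact (h.add ((Complex.ofRealCLM.hasDerivAt (x := y)).const_mul _)).hasDerivWithinAt
  · intro y hy
    have e : (1-s)*(y:ℂ)^(1-s-1) + (s-1)*((n:ℝ):ℂ)^(-s) * 1 = -((s-1) * ((y:ℂ)^(-s) - ((n:ℝ):ℂ)^(-s))) := by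
      have : 1 - s - 1 = -s := by ring
      rw [this]; ring
    rw [e, norm_neg, norm_mul]
    have := gt_inner hn0 hy.1 hs
    calc _ ≤ ‖s-1‖ * (‖s‖ * (n:ℝ)^(-s.re-1) * (y - n)) := by gcongr
      _ ≤ ‖s-1‖ * (‖s‖ * (n:ℝ)^(-s.re-1) * 1) := by
        gcongr
        have := hy.2; linarith
      _ = _ := by ring

lemma gt_diff {n : ℕ} (hn : 1 ≤ n) : Differentiable ℂ (gt n) := by
  have hn0 : ((n:ℝ):ℂ) ≠ 0 := by exact_mod_cast (by omega : n ≠ 0)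
  have hn1 : (((n:ℝ)+1:ℝ):ℂ) ≠ 0 := by
    have : (n:ℝ)+1 ≠ 0 := by positivity
    exact_mod_cast this
  intro s
  unfold gt
  refine DifferentiableAt.sub (DifferentiableAt.add (DifferentiableAt.mul (by fun_prop) ?_) ?_) ?_
  · exact DifferentiableAt.const_cpow (by fun_prop) (Or.inl hn0)
  · exact DifferentiableAt.const_cpow (by fun_prop) (Or.inl hn1)
  · exact DifferentiableAt.const_cpow (by fun_prop) (Or.inl hn0)

lemma summable_shift_rpow {N : ℕ} {a : ℝ} (ha : a < -1) :
    Summable (fun n : ℕ => ((n + N : ℕ):ℝ)^a) :=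
  (summable_nat_add_iff N).mpr (Real.summable_nat_rpow.mpr ha)

/-- truncated formula, `re s > 1` -/
lemma Zf_formula_one {N : ℕ} (hN : 1 ≤ N) {s : ℂ} (hs : 1 < s.re) :
    Zf s = (s-1) * ∑ n ∈ Finset.range N, (if n = 0 then 0 else ((n:ℝ):ℂ)^(-s)) + ((N:ℝ):ℂ)^(1-s)
      + ∑' n : ℕ, gt (n+N) s := by
  have hs1 : s ≠ 1 := by rintro rfl; simp at hs
  have hs0 : s ≠ 0 := by rintro rfl; simp at hs; linarith
  rw [Zf_of_ne hs1, zeta_eq_tsum_one_div_nat_cpow hs]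
  have hsum : Summable (fun n : ℕ => 1/(n:ℂ)^s) := Complex.summable_one_div_nat_cpow.mpr hs
  rw [← hsum.sum_add_tsum_nat_add N, mul_add, add_assoc]
  congr 1
  · congr 1
    refine Finset.sum_congr rfl fun n _ => ?_
    split_ifs with h
    · subst h; simp [hs0]
    · rw [cpow_neg]; simp
  · have hsumN : Summable (fun n : ℕ => 1/((n+N:ℕ):ℂ)^s) := (summable_nat_add_iff N).mpr hsum
    have tel : HasSum (fun n : ℕ => ((((n+N:ℕ):ℝ)+1:ℝ):ℂ)^(1-s) - (((n+N:ℕ):ℝ):ℂ)^(1-s)) (0 - ((N:ℝ):ℂ)^(1-s)) := by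
      have hsm : Summable (fun n : ℕ => ((((n+N:ℕ):ℝ)+1:ℝ):ℂ)^(1-s) - (((n+N:ℕ):ℝ):ℂ)^(1-s)) := by
        have hg : Summable (fun n : ℕ => gt (n+N) s) := by
          refine Summable.of_norm_bounded ((summable_shift_rpow (N := N) (a := -s.re-1) (by linarith)).mul_left (‖s‖*‖s-1‖)) ?_
          intro n; exact gt_bound (by omega) (by linarith)
        have := hg.sub (hsumN.mul_left (s-1))
        refine this.congr fun n => ?_
        simp only [gt, cpow_neg]; push_cast; ring
      refine (hsm.hasSum_iff_tendsto_nat).mpr ?_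
      have e : ∀ m : ℕ, ∑ n ∈ Finset.range m, (((((n+N:ℕ):ℝ)+1:ℝ):ℂ)^(1-s) - (((n+N:ℕ):ℝ):ℂ)^(1-s))
          = (((m+N:ℕ):ℝ):ℂ)^(1-s) - ((N:ℝ):ℂ)^(1-s) := by
        intro m
        have := Finset.sum_range_sub (fun n : ℕ => (((n+N:ℕ):ℝ):ℂ)^(1-s)) m
        simp only [Nat.zero_add] at this
        rw [← this]
        refine Finset.sum_congr rfl fun n _ => ?_
        congr 3; push_cast; ring
      simp_rw [e]
      refine Filter.Tendsto.sub_const ?_ _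
      rw [tendsto_zero_iff_norm_tendsto_zero]
      have h3 : Filter.Tendsto (fun m : ℕ => ((m+N:ℕ):ℝ)^(-(s.re-1))) Filter.atTop (nhds 0) :=
        (tendsto_rpow_neg_atTop (by linarith)).comp (tendsto_natCast_atTop_atTop.comp (Filter.tendsto_add_atTop_nat N))
      refine h3.congr fun m => ?_
      rw [norm_cpow_eq_rpow_re_of_pos (by have : 0 < m+N := by omega
                                          exact_mod_cast this)]
      simp
    have h4 := (hsumN.mul_left (s-1)).hasSum.add tel
    have h5 : ∑' n : ℕ, gt (n+N) s = ∑' (b : ℕ), (s - 1) * (1 / ((b + N : ℕ):ℂ) ^ s) + (0 - ((N:ℝ):ℂ) ^ (1 - s)) := by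
      rw [← h4.tsum_eq]
      refine tsum_congr fun n => ?_
      simp only [gt, cpow_neg]; push_cast; ring
    rw [h5, tsum_mul_left]; ring

lemma Zf_formula {N : ℕ} (hN : 1 ≤ N) {s : ℂ} (hs : 1/2 < s.re) :
    Zf s = (s-1) * ∑ n ∈ Finset.range N, (if n = 0 then 0 else ((n:ℝ):ℂ)^(-s)) + ((N:ℝ):ℂ)^(1-s)
      + ∑' n : ℕ, gt (n+N) s := by
  set R := ‖s‖ + 3 with hR
  set U : Set ℂ := {z | 1/2 < z.re} ∩ Metric.ball 0 R with hU
  have hUo : IsOpen U := (isOpen_lt continuous_const Complex.continuous_re).inter Metric.isOpen_ball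
  have hUc : Convex ℝ U := (convex_halfSpace_re_gt _).inter (convex_ball _ _)
  have hN0 : ((N:ℝ):ℂ) ≠ 0 := by exact_mod_cast (by omega : N ≠ 0)
  have hd1 : DifferentiableOn ℂ (fun s => ∑' n : ℕ, gt (n+N) s) U := by
    refine differentiableOn_tsum_of_summable_norm (u := fun n : ℕ => R*(R+1)*((n+N:ℕ):ℝ)^(-(3/2):ℝ))
      ((summable_shift_rpow (by norm_num)).mul_left _) (fun n => (gt_diff (by omega)).differentiableOn) hUo ?_
    intro n z hz
    have hz1 : 1/2 < z.re := hz.1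
    have hz2 : ‖z‖ < R := by simpa using hz.2
    refine (gt_bound (by omega) (by linarith)).trans ?_
    have : ‖z - 1‖ ≤ R+1 := (norm_sub_le _ _).trans (by simp; linarith)
    have h1 : (1:ℝ) ≤ ((n+N:ℕ):ℝ) := by exact_mod_cast (by omega : 1 ≤ n+N)
    gcongr
    linarith
  have hd2 : DifferentiableOn ℂ (fun s => (s-1) * ∑ n ∈ Finset.range N, (if n = 0 then 0 else ((n:ℝ):ℂ)^(-s)) + ((N:ℝ):ℂ)^(1-s)
      + ∑' n : ℕ, gt (n+N) s) U := by
    refine DifferentiableOn.add (Differentiable.differentiableOn ?_) hd1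
    refine Differentiable.add (Differentiable.mul (by fun_prop) ?_) ?_
    · refine Differentiable.fun_sum fun n _ => ?_
      split_ifs with h
      · fun_prop
      · intro z
        refine DifferentiableAt.const_cpow (by fun_prop) (Or.inl (by exact_mod_cast h))
    · intro z
      exact DifferentiableAt.const_cpow (by fun_prop) (Or.inl hN0)
  have h2U : (2:ℂ) ∈ U := ⟨by simp; norm_num, by simp [hR]; linarith [norm_nonneg s]⟩
  refine AnalyticOnNhd.eqOn_of_preconnected_of_eventuallyEq
    (Zf_diff.differentiableOn.analyticOnNhd hUo) (hd2.analyticOnNhd hUo) hUc.isPreconnected h2U ?_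
    ⟨hs, by simp [hR]⟩
  have : {z : ℂ | 1 < z.re} ∈ nhds (2:ℂ) :=
    (isOpen_lt continuous_const Complex.continuous_re).mem_nhds (by simp)
  filter_upwards [this] with z hz
  exact Zf_formula_one hN hz

end MillsInd

namespace MillsInd
open Complex

lemma three_half_tel {n : ℕ} (hn : 1 ≤ n) :
    (n:ℝ)^(-(3/2):ℝ) ≤ 4 * (1/√(n:ℝ)) - 4 * (1/√((n+1:ℕ):ℝ)) := by
  have hn0 : (1:ℝ) ≤ n := by exact_mod_cast hn
  set a := √(n:ℝ) with ha
  set b := √((n+1:ℕ):ℝ) with hb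
  have ha2 : a^2 = n := Real.sq_sqrt (by linarith)
  have hb2 : b^2 = a^2+1 := by rw [hb, Real.sq_sqrt (by positivity), ha2]; push_cast; ring
  have ha1 : 1 ≤ a := by rw [ha]; exact Real.one_le_sqrt.mpr hn0
  have hb0 : 0 < b := by rw [hb]; positivity
  have e : (n:ℝ)^(-(3/2):ℝ) = 1/a^3 := by
    rw [ha, Real.sqrt_eq_rpow, ← Real.rpow_natCast, ← Real.rpow_mul (by linarith), Real.rpow_neg (by linarith)]
    norm_num
  rw [e]
  have hba : b ≤ 1.42 * a := by nlinarith
  have hab : a < b := by nlinarith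
  have e2 : 4 * (1/a) - 4 * (1/b) = 4 / (a*b*(a+b)) := by
    field_simp; nlinarith
  rw [e2, div_le_div_iff₀ (by positivity) (by positivity)]
  have : b*(a+b) ≤ 4 * a^2 := by nlinarith
  nlinarith

lemma tsum_three_half {N : ℕ} (hN : 1 ≤ N) :
    ∑' n : ℕ, ((n+N:ℕ):ℝ)^(-(3/2):ℝ) ≤ 4 * (1/√(N:ℝ)) := by
  refine Real.tsum_le_of_sum_range_le (fun n => by positivity) fun m => ?_
  have : ∑ n ∈ Finset.range m, ((n+N:ℕ):ℝ)^(-(3/2):ℝ) ≤ ∑ n ∈ Finset.range m,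
      (4 * (1/√((n+N:ℕ):ℝ)) - 4 * (1/√((n+1+N:ℕ):ℝ))) := by
    refine Finset.sum_le_sum fun n _ => ?_
    have := three_half_tel (n := n+N) (by omega)
    rwa [show n+N+1 = n+1+N by ring] at this
  refine this.trans ?_
  rw [Finset.sum_range_sub' (fun n : ℕ => 4 * (1/√((n+N:ℕ):ℝ)))]
  simp only [Nat.zero_add]
  have : 0 ≤ 4 * (1/√((m+N:ℕ):ℝ)) := by positivity
  linarith

lemma rpow_small {T L x σ : ℝ} (hL : 0 < L) (hT : Real.log T = L) (hT0 : 1 < T) (hx : 1 ≤ x) (k : ℝ) 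
    (hxT : x ≤ T^k) (hσ : 1 - 1/L ≤ σ) : x^(1-σ) ≤ Real.exp k := by
  have h1 : x^(1-σ) ≤ x^(1/L) := Real.rpow_le_rpow_of_exponent_le hx (by linarith)
  have h2 : x^(1/L) ≤ (T^k)^(1/L) := Real.rpow_le_rpow (by linarith) hxT (by positivity)
  refine h1.trans (h2.trans (le_of_eq ?_))
  rw [← Real.rpow_mul (by linarith), Real.rpow_def_of_pos (by linarith), hT]
  congr 1; field_simp

lemma zeta_bound {T : ℝ} (hL : 3 ≤ Real.log T) (hT0 : 1 < T) {s : ℂ} (hs1 : 1 - 1/Real.log T ≤ s.re)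
    (hs3 : s.re ≤ 3) (ht : 1/2 ≤ |s.im|) (htT : |s.im| ≤ T) : ‖riemannZeta s‖ ≤ 300 * Real.log T := by
  set L := Real.log T with hLdef
  have hT4 : 4 ≤ T := by
    have := Real.log_le_sub_one_of_pos (by linarith : 0 < T); linarith
  have hre : 1/2 < s.re := by
    have : 1/L ≤ 1/3 := by apply one_div_le_one_div_of_le <;> linarith
    linarith
  have hs_ne : s ≠ 1 := by rintro rfl; simp at ht; linarith
  have hsm : 1/2 ≤ ‖s-1‖ := by
    have := Complex.abs_im_le_norm (s-1); simp at this; linarith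
  set N := ⌈T⌉₊ with hN
  have hN1 : T ≤ N := Nat.le_ceil T
  have hN2 : (N:ℝ) < T+1 := Nat.ceil_lt_add_one (by linarith)
  have hNone : 1 ≤ N := by
    have : (1:ℝ) ≤ N := by linarith
    exact_mod_cast this
  have hNT2 : (N:ℝ) ≤ T^(2:ℝ) := by
    rw [Real.rpow_two]; nlinarith
  have hE1 : Real.exp 1 < 3 := by have := Real.exp_one_lt_d9; linarith
  have hE2 : Real.exp 2 < 9 := by
    have : Real.exp 2 = Real.exp 1 ^ 2 := by rw [← Real.exp_nat_mul]; norm_num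
    rw [this]; nlinarith [Real.exp_pos 1]
  have hNs : (N:ℝ)^(1-s.re) ≤ 9 :=
    (rpow_small (by linarith) hLdef.symm hT0 (by linarith) 2 hNT2 hs1).trans hE2.le
  have hsn : ‖s‖ ≤ 2*T := by
    have := Complex.norm_le_abs_re_add_abs_im s
    rw [abs_of_pos (by linarith : 0 < s.re)] at this; linarith
  have hZ := Zf_formula hNone hre
  rw [Zf_of_ne hs_ne] at hZ
  have hs1' : s - 1 ≠ 0 := sub_ne_zero.mpr hs_ne
  set A := ∑ n ∈ Finset.range N, (if n = 0 then 0 else ((n:ℝ):ℂ)^(-s)) with hA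
  have bA : ‖A‖ ≤ 6 * L := by
    calc ‖A‖ ≤ ∑ n ∈ Finset.range N, ‖(if n = 0 then 0 else ((n:ℝ):ℂ)^(-s))‖ := norm_sum_le _ _
      _ ≤ ∑ n ∈ Finset.range N, 3 * (n:ℝ)⁻¹ := by
        refine Finset.sum_le_sum fun n hn => ?_
        split_ifs with h
        · simp [h]
        · have hn1 : (1:ℝ) ≤ n := by exact_mod_cast Nat.one_le_iff_ne_zero.mpr h
          have hnT : (n:ℝ) ≤ T := by
            have := Nat.lt_ceil.mp (Finset.mem_range.mp hn); exact this.le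
          rw [norm_cpow_eq_rpow_re_of_pos (by linarith)]
          have := rpow_small (by linarith) hLdef.symm hT0 hn1 1 (by simpa using hnT) hs1
          have e : (n:ℝ)^((-s).re) = (n:ℝ)^(1-s.re) * (n:ℝ)⁻¹ := by
            rw [← Real.rpow_neg_one, ← Real.rpow_add (by linarith)]; simp only [neg_re]; congr 1; ring
          rw [e]; gcongr; linarith
      _ = 3 * ∑ n ∈ Finset.range N, (n:ℝ)⁻¹ := by rw [Finset.mul_sum]
      _ ≤ 3 * (1 + L) := by
        gcongr
        obtain ⟨M, hM⟩ : ∃ M, N = M+1 := ⟨N-1, by omega⟩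
        rw [hM, Finset.sum_range_succ']
        have := harmonic_le_one_add_log M
        simp only [harmonic] at this
        push_cast at this ⊢
        simp only [inv_zero, add_zero]
        refine this.trans ?_
        have hMT : (M:ℝ) ≤ T := by
          have : (N:ℝ) = M+1 := by exact_mod_cast hM
          linarith
        rcases Nat.eq_zero_or_pos M with h | h
        · simp [h]; linarith
        · have := Real.log_le_log (by exact_mod_cast h) hMT; linarith
      _ ≤ 6 * L := by linarith
  have bB : ‖((N:ℝ):ℂ)^(1-s)‖ ≤ 9 := by
    rw [norm_cpow_eq_rpow_re_of_pos (by linarith)]; simpa using hNs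
  have bG : ‖∑' n : ℕ, gt (n+N) s‖ ≤ ‖s-1‖ * 72 := by
    have hb : ∀ n : ℕ, ‖gt (n+N) s‖ ≤ ‖s‖*‖s-1‖*(N:ℝ)^(1/2-s.re) * ((n+N:ℕ):ℝ)^(-(3/2):ℝ) := by
      intro n
      refine (gt_bound (by omega) (by linarith)).trans ?_
      rw [mul_assoc (‖s‖*‖s-1‖)]
      refine mul_le_mul_of_nonneg_left ?_ (by positivity)
      have hNn : (N:ℝ) ≤ ((n+N:ℕ):ℝ) := by push_cast; linarith [Nat.cast_nonneg (α := ℝ) n]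
      have e : ((n+N:ℕ):ℝ)^(-s.re-1) = ((n+N:ℕ):ℝ)^(1/2-s.re) * ((n+N:ℕ):ℝ)^(-(3/2):ℝ) := by
        rw [← Real.rpow_add (by linarith)]; congr 1; ring
      rw [e]
      exact mul_le_mul_of_nonneg_right (Real.rpow_le_rpow_of_nonpos (by linarith) hNn (by linarith)) (by positivity)
    have hsum := (summable_shift_rpow (N := N) (a := -(3/2)) (by norm_num)).mul_left (‖s‖*‖s-1‖*(N:ℝ)^(1/2-s.re))
    have h1 := tsum_of_norm_bounded hsum.hasSum hb
    rw [tsum_mul_left] at h1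
    refine h1.trans ?_
    have h2 := tsum_three_half hNone
    have e : (N:ℝ)^(1/2-s.re) * (4 * (1/√(N:ℝ))) = 4 * ((N:ℝ)^(1-s.re) / N) := by
      have hNp : (0:ℝ) < N := by linarith
      have e1 : (1/√(N:ℝ)) = (N:ℝ)^(-(1/2):ℝ) := by rw [Real.sqrt_eq_rpow, Real.rpow_neg hNp.le]; simp
      have e2 : (N:ℝ)^(1-s.re) / N = (N:ℝ)^(-s.re) := by
        rw [Real.rpow_sub hNp, Real.rpow_one, Real.rpow_neg hNp.le]; field_simp
      rw [e1, e2]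
      have : (N:ℝ)^(1/2-s.re) * (N:ℝ)^(-(1/2):ℝ) = (N:ℝ)^(-s.re) := by
        rw [← Real.rpow_add hNp]; congr 1; ring
      linear_combination 4 * this
    calc ‖s‖*‖s-1‖*(N:ℝ)^(1/2-s.re) * ∑' n : ℕ, ((n+N:ℕ):ℝ)^(-(3/2):ℝ)
        ≤ ‖s‖*‖s-1‖*(N:ℝ)^(1/2-s.re) * (4 * (1/√(N:ℝ))) := by gcongr
      _ = ‖s-1‖ * (4 * (‖s‖ / N) * (N:ℝ)^(1-s.re)) := by rw [mul_assoc _ ((N:ℝ)^(1/2-s.re)), e]; ring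
      _ ≤ ‖s-1‖ * (4 * 2 * 9) := by
        gcongr
        rw [div_le_iff₀ (by linarith)]; linarith
      _ = _ := by ring
  have e : riemannZeta s = A + (((N:ℝ):ℂ)^(1-s))/(s-1) + (∑' n : ℕ, gt (n+N) s)/(s-1) := by
    field_simp; linear_combination hZ
  rw [e]
  refine (norm_add₃_le).trans ?_
  have h2 : ‖(((N:ℝ):ℂ)^(1-s))/(s-1)‖ ≤ 18 := by
    rw [norm_div, div_le_iff₀ (by linarith)]; linarith
  have h3 : ‖(∑' n : ℕ, gt (n+N) s)/(s-1)‖ ≤ 72 := by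
    rw [norm_div, div_le_iff₀ (by linarith)]; linarith
  linarith

end MillsInd

namespace MillsInd
open Complex

lemma zeta_deriv_bound {T : ℝ} (hL : 3 ≤ Real.log T) (hT0 : 1 < T) {s : ℂ} (hs1 : 1 - 1/(2*Real.log T) ≤ s.re)
    (hs3 : s.re ≤ 2) (ht : 1 ≤ |s.im|) (htT : |s.im| + 1 ≤ T) : ‖deriv riemannZeta s‖ ≤ 600 * Real.log T ^ 2 := by
  set L := Real.log T with hLdef
  have hr : 0 < 1/(2*L) := by positivity
  have hr2 : 1/(2*L) ≤ 1/6 := by apply one_div_le_one_div_of_le <;> linarith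
  have hr3 : 1/L = 2 * (1/(2*L)) := by field_simp
  have hclose : ∀ z ∈ Metric.closedBall s (1/(2*L)), |z.re - s.re| ≤ 1/(2*L) ∧ |z.im - s.im| ≤ 1/(2*L) := by
    intro z hz
    rw [Metric.mem_closedBall, dist_eq_norm] at hz
    have h1 := Complex.abs_re_le_norm (z-s)
    have h2 := Complex.abs_im_le_norm (z-s)
    simp only [sub_re, sub_im] at h1 h2
    exact ⟨h1.trans hz, h2.trans hz⟩
  have him : ∀ z ∈ Metric.closedBall s (1/(2*L)), 1/2 ≤ |z.im| ∧ |z.im| ≤ T := by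
    intro z hz
    have h2 := (hclose z hz).2
    have h3 := abs_sub_abs_le_abs_sub z.im s.im
    have h4 := abs_sub_abs_le_abs_sub s.im z.im
    rw [abs_sub_comm] at h4
    constructor <;> linarith
  have h := norm_deriv_le_of_forall_mem_sphere_norm_le (f := riemannZeta) (c := s) (C := 300 * L) hr ?_ ?_
  · refine h.trans (le_of_eq ?_); field_simp; ring
  · refine DifferentiableOn.diffContOnCl fun z hz => ?_
    have hz := Metric.closure_ball_subset_closedBall hz
    refine (differentiableAt_riemannZeta ?_).differentiableWithinAt
    rintro rfl
    have := (him 1 hz).1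
    simp at this; linarith
  · intro z hz
    have hz := Metric.sphere_subset_closedBall hz
    have h1 := abs_le.mp (hclose z hz).1
    exact zeta_bound hL hT0 (by linarith [h1.1]) (by linarith [h1.2]) (him z hz).1 (him z hz).2

lemma Zf_bounded : ∃ C : ℝ, 1 ≤ C ∧ ∀ x : ℝ, 0 ≤ x → x ≤ 3 → ‖Zf (1+x)‖ ≤ C := by
  obtain ⟨C, hC⟩ := (isCompact_Icc (a := (0:ℝ)) (b := 3)).exists_bound_of_continuousOn
    (f := fun x : ℝ => Zf (1+x)) ((Zf_diff.continuous.comp (by fun_prop)).continuousOn)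
  exact ⟨max C 1, le_max_right _ _, fun x h0 h1 => (hC x ⟨h0,h1⟩).trans (le_max_left _ _)⟩

lemma zeta_real_bound : ∃ C : ℝ, 1 ≤ C ∧ ∀ x : ℝ, 0 < x → x ≤ 3 → ‖riemannZeta (1+x)‖ ≤ C / x := by
  obtain ⟨C, h1, hC⟩ := Zf_bounded
  refine ⟨C, h1, fun x h0 h3 => ?_⟩
  have := hC x h0.le h3
  rw [Zf_of_ne (by simpa using h0.ne')] at this
  rw [norm_mul] at this
  simp only [add_sub_cancel_left, norm_real, Real.norm_eq_abs, abs_of_pos h0] at this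
  rw [le_div_iff₀ h0]; linarith

lemma zeta_341 {x : ℝ} (hx : 0 < x) (y : ℝ) :
    1 ≤ ‖riemannZeta (1+x)‖^3 * ‖riemannZeta (1+x+I*y)‖^4 * ‖riemannZeta (1+x+2*I*y)‖ := by
  have := DirichletCharacter.norm_LFunction_product_ge_one (N := 1) 1 hx y
  rw [DirichletCharacter.LFunctionTrivChar] at this
  simp only [DirichletCharacter.LFunction_modOne_eq, norm_mul, norm_pow] at this
  exact this

lemma zeta_lower : ∃ a c : ℝ, 0 < a ∧ a ≤ 1 ∧ 0 < c ∧ ∀ T : ℝ, 3 ≤ Real.log T → 1 < T → ∀ s : ℂ,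
    1 - a / Real.log T ^ 9 ≤ s.re → s.re ≤ 2 → 1 ≤ |s.im| → 2 * |s.im| ≤ T →
    c / Real.log T ^ 7 ≤ ‖riemannZeta s‖ := by
  obtain ⟨C0, hC1, hC0⟩ := zeta_real_bound
  set D := 300 * C0^3 with hD
  have hD1 : 1 ≤ D := by
    have : 1 ≤ C0^3 := one_le_pow₀ hC1
    linarith
  set b := 1/(2400*D) with hb
  have hb0 : 0 < b := by positivity
  have hbD : 2400 * D * b = 1 := by rw [hb]; field_simp
  have hb1 : b ≤ 1 := by nlinarith
  refine ⟨b^4, b^3/(2*D), by positivity, pow_le_one₀ hb0.le hb1, by positivity, ?_⟩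
  intro T hL hT s hs1 hs2 ht htT
  set L := Real.log T with hLdef
  have hL0 : 0 < L := by linarith
  -- right part
  have right : ∀ x : ℝ, b^4/L^9 ≤ x → x ≤ 1 → b^3/(D*L^7) ≤ ‖riemannZeta (1+x+I*s.im)‖ := by
    intro x hx hx1
    have hx0 : 0 < x := lt_of_lt_of_le (by positivity) hx
    have h1 := zeta_341 hx0 s.im
    have h2 := hC0 x hx0 (by linarith)
    have h3 : ‖riemannZeta (1+x+2*I*s.im)‖ ≤ 300 * L := by
      apply zeta_bound hL hT
      · simp; have : 0 < L⁻¹ := by positivity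
        linarith
      · simp; linarith
      · simp [abs_mul]; linarith
      · simp [abs_mul]; linarith
    set z := ‖riemannZeta (1+x+I*s.im)‖ with hz
    have h4 : 1 ≤ (C0/x)^3 * z^4 * (300*L) := h1.trans (by gcongr)
    have h5 : x^3 ≤ z^4 * (D * L) := by
      have e : (C0/x)^3 * z^4 * (300*L) = z^4*(D*L)/x^3 := by rw [hD]; field_simp
      rw [e, le_div_iff₀ (by positivity)] at h4; linarith
    have h6 : (b^4/L^9)^3 ≤ z^4 * (D*L) := le_trans (by gcongr) h5
    refine le_of_pow_le_pow_left₀ (n := 4) (by norm_num) (norm_nonneg _) ?_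
    have h7 : (b^3/(D*L^7))^4 * (D*L) ≤ (b^4/L^9)^3 := by
      have e : (b^3/(D*L^7))^4 * (D*L) = (b^4/L^9)^3 * (1/D^3) := by field_simp
      rw [e]
      have : 1/D^3 ≤ 1 := by rw [div_le_one (by positivity)]; exact one_le_pow₀ hD1
      exact mul_le_of_le_one_right (by positivity) this
    exact le_of_mul_le_mul_right (h7.trans h6) (by positivity)
  have half : b^3/(2*D)/L^7 = b^3/(D*L^7)/2 := by field_simp
  have hpos : 0 < b^3/(D*L^7) := by positivity
  have hseq : ∀ σ : ℝ, (σ:ℂ) + I * s.im = 1 + ((σ-1:ℝ):ℂ) + I * s.im := by intro σ; push_cast; ring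
  have hs : s = (s.re:ℂ) + I * s.im := by rw [mul_comm]; exact (Complex.re_add_im s).symm
  by_cases hbig : 1 + b^4/L^9 ≤ s.re
  · have := right (s.re-1) (by linarith) (by linarith)
    rw [← hseq, ← hs] at this
    rw [half]; linarith
  push Not at hbig
  have hsmall : b^4/L^9 ≤ 1/(2*L) := by
    rw [div_le_div_iff₀ (by positivity) (by positivity)]
    have h1 : b^4 ≤ 1 := pow_le_one₀ hb0.le hb1
    have h2 : (2:ℝ) ≤ L^8 := by
      have : (3:ℝ)^8 ≤ L^8 := by gcongr
      linarith
    have e : L^9 = L^8*L := by ring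
    rw [e]
    nlinarith
  have hs6 : 1/(2*L) ≤ 1/6 := by apply one_div_le_one_div_of_le <;> linarith
  set σ0 := 1 + b^4/L^9 with hσ0
  have h1 := right (b^4/L^9) le_rfl (by linarith)
  have e0 : (1:ℂ) + ((b^4/L^9:ℝ):ℂ) + I*s.im = (σ0:ℂ) + I * s.im := by rw [hσ0]; push_cast; ring
  rw [e0] at h1
  have hdiff : ‖riemannZeta ((σ0:ℂ) + I * s.im) - riemannZeta ((s.re:ℂ) + I * s.im)‖ ≤ 600 * L^2 * (σ0 - s.re) := by
    refine norm_image_sub_le_of_norm_deriv_le_segment' (f := fun x : ℝ => riemannZeta ((x:ℂ) + I * s.im))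
      (f' := fun x : ℝ => deriv riemannZeta ((x:ℂ) + I * s.im)) ?_ ?_ σ0 ⟨hbig.le, le_rfl⟩
    · intro x hx
      have hne : (x:ℂ) + I * s.im ≠ 1 := by
        intro h
        have := congrArg Complex.im h
        simp at this; rw [this] at ht; simp at ht; linarith
      have h := (differentiableAt_riemannZeta hne).hasDerivAt
      have h2 : HasDerivAt (fun z : ℂ => z + I * s.im) 1 (x:ℂ) := (hasDerivAt_id _).add_const _
      have h3 := HasDerivAt.comp (x:ℂ) h h2
      have h4 := HasDerivAt.comp_ofReal h3
      simpa using h4.hasDerivWithinAt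
    · intro x hx
      apply zeta_deriv_bound hL hT
      · simp only [add_re, ofReal_re, mul_re, I_re, I_im, ofReal_im]; linarith [hx.1]
      · simp only [add_re, ofReal_re, mul_re, I_re, I_im, ofReal_im]; linarith [hx.2]
      · simpa using ht
      · simp; linarith
  rw [← hs] at hdiff
  have hd2 : 600 * L^2 * (σ0 - s.re) ≤ b^3/(D*L^7)/2 := by
    calc 600 * L^2 * (σ0 - s.re) ≤ 600 * L^2 * (2 * (b^4/L^9)) := by gcongr; linarith
      _ = (2400 * D * b) * (b^3/(D*L^7)/2) := by field_simp; ring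
      _ = _ := by rw [hbD, one_mul]
  have := norm_sub_norm_le (riemannZeta ((σ0:ℂ) + I * s.im)) (riemannZeta s)
  rw [half]; linarith

end MillsInd

namespace MillsInd
open Complex Filter

noncomputable def Fz (s : ℂ) : ℂ := -(deriv Zf s / Zf s) - dslope Zf 1 s

lemma Fz_eq {s : ℂ} (h1 : s ≠ 1) (hz : riemannZeta s ≠ 0) :
    Fz s = -deriv riemannZeta s / riemannZeta s - riemannZeta s := by
  have hs1 : s - 1 ≠ 0 := sub_ne_zero.mpr h1
  have hd : deriv Zf s = riemannZeta s + (s-1) * deriv riemannZeta s := by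
    have he : Zf =ᶠ[nhds s] fun z => (z-1)*riemannZeta z := by
      filter_upwards [isOpen_ne.mem_nhds h1] with z hz using Zf_of_ne hz
    rw [he.deriv_eq]
    have h2 : HasDerivAt (fun z : ℂ => z - 1) 1 s := (hasDerivAt_id _).sub_const _
    have := (h2.mul (differentiableAt_riemannZeta h1).hasDerivAt).deriv
    rw [show (fun z => (z-1)*riemannZeta z) = (fun z : ℂ => z - 1) * riemannZeta from rfl, this]; ring
  rw [Fz, hd, dslope_of_ne _ h1, slope_def_field, Zf_one, Zf_of_ne h1]
  field_simp
  ring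

lemma Fz_diff {s : ℂ} (h : Zf s ≠ 0) : DifferentiableAt ℂ Fz s := by
  have h1 : DifferentiableAt ℂ (dslope Zf 1) s :=
    ((Complex.differentiableOn_dslope (s := Set.univ) Filter.univ_mem).mpr Zf_diff.differentiableOn s (Set.mem_univ _)).differentiableAt Filter.univ_mem
  have h2 : DifferentiableAt ℂ (deriv Zf) s :=
    (Zf_diff.differentiableOn.deriv isOpen_univ s (Set.mem_univ _)).differentiableAt Filter.univ_mem
  exact ((h2.div (Zf_diff s) h).neg).sub h1

lemma Zf_ne_zero {s : ℂ} (h : 1 ≤ s.re) : Zf s ≠ 0 := by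
  by_cases h1 : s = 1
  · subst h1; rw [Zf_one]; exact one_ne_zero
  · rw [Zf_of_ne h1]
    exact mul_ne_zero (sub_ne_zero.mpr h1) (riemannZeta_ne_zero_of_one_le_re h)

lemma low_region : ∃ δ C : ℝ, 0 < δ ∧ ∀ s : ℂ, 1 - δ ≤ s.re → s.re ≤ 2 → |s.im| ≤ 1 →
    Zf s ≠ 0 ∧ ‖Fz s‖ ≤ C := by
  set K : Set ℂ := Set.Icc 1 2 ×ℂ Set.Icc (-1) 1 with hK
  have hKc : IsCompact K := isCompact_Icc.reProdIm isCompact_Icc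
  have hV : IsOpen {s : ℂ | Zf s ≠ 0} := isOpen_ne_fun Zf_diff.continuous continuous_const
  obtain ⟨δ, hδ, hsub⟩ := hKc.exists_thickening_subset_open hV (fun s hs => Zf_ne_zero hs.1.1)
  have hnz : ∀ s : ℂ, 1 - δ/2 ≤ s.re → s.re ≤ 2 → |s.im| ≤ 1 → Zf s ≠ 0 := by
    intro s h1 h2 h3
    apply hsub
    rw [Metric.mem_thickening_iff]
    refine ⟨(max 1 s.re : ℝ) + s.im * I, ?_, ?_⟩
    · refine ⟨?_, ?_⟩
      · simp [h2]
      · simpa using abs_le.mp h3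
    · rw [dist_eq_norm]
      have : s - ((max 1 s.re : ℝ) + s.im * I) = ((s.re - max 1 s.re : ℝ) : ℂ) := by
        apply Complex.ext <;> simp
      rw [this, norm_real, Real.norm_eq_abs, abs_lt]
      rcases le_total 1 s.re with h | h
      · rw [max_eq_right h]; constructor <;> linarith
      · rw [max_eq_left h]; constructor <;> linarith
  set K' : Set ℂ := Set.Icc (1-δ/2) 2 ×ℂ Set.Icc (-1) 1 with hK'
  have hKc' : IsCompact K' := isCompact_Icc.reProdIm isCompact_Icc
  obtain ⟨C, hC⟩ := hKc'.exists_bound_of_continuousOn (f := Fz) (fun s hs =>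
    (Fz_diff (hnz s hs.1.1 hs.1.2 (abs_le.mpr hs.2))).continuousAt.continuousWithinAt)
  exact ⟨δ/2, C, by positivity, fun s h1 h2 h3 => ⟨hnz s h1 h2 h3, hC s ⟨⟨h1,h2⟩, abs_le.mp h3⟩⟩⟩

lemma zero_free : ∃ L0 : ℝ, 3 ≤ L0 ∧ ∀ L : ℝ, L0 ≤ L → ∀ s : ℂ, 1 - 1/L^10 ≤ s.re → s.re ≤ 2 →
    |s.im| ≤ Real.exp L → Zf s ≠ 0 ∧ ‖Fz s‖ ≤ L^10 := by
  obtain ⟨δ, C, hδ, hlow⟩ := low_region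
  obtain ⟨a, c, ha, ha1, hc, hlower⟩ := zeta_lower
  set M := max (max 3 C) (max (1/δ) (max (2^9/a) (2^9*(600/c+300)))) with hM
  have hM3 : 3 ≤ M := le_max_of_le_left (le_max_left _ _)
  have hMC : C ≤ M := le_max_of_le_left (le_max_right _ _)
  have hMδ : 1/δ ≤ M := le_max_of_le_right (le_max_left _ _)
  have hMa : 2^9/a ≤ M := le_max_of_le_right (le_max_of_le_right (le_max_left _ _))
  have hMc : 2^9*(600/c+300) ≤ M := le_max_of_le_right (le_max_of_le_right (le_max_right _ _))
  refine ⟨M, hM3, fun L hL s h1 h2 h3 => ?_⟩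
  have hL3 : 3 ≤ L := hM3.trans hL
  have hL1 : L ≤ L^10 := le_self_pow₀ (by linarith) (by norm_num)
  by_cases ht : |s.im| ≤ 1
  · have hx : 1/L^10 ≤ δ := by
      rw [div_le_iff₀ (by positivity)]
      have : 1/δ ≤ L^10 := by linarith
      rw [div_le_iff₀ hδ] at this; linarith
    obtain ⟨h4, h5⟩ := hlow s (by linarith) h2 ht
    exact ⟨h4, h5.trans (by linarith)⟩
  push Not at ht
  set T := Real.exp (2*L) with hT
  have hlogT : Real.log T = 2*L := Real.log_exp _
  have hT1 : 1 < T := by rw [hT]; exact Real.one_lt_exp_iff.mpr (by linarith)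
  have hTT : 2 * |s.im| ≤ T := by
    have e : T = Real.exp L * Real.exp L := by rw [hT, ← Real.exp_add]; congr 1; ring
    have h5 := Real.add_one_le_exp L
    rw [e]; nlinarith
  have h6 : 1/L^10 ≤ a/(2*L)^9 := by
    rw [div_le_div_iff₀ (by positivity) (by positivity)]
    have : 2^9/a ≤ L := by linarith
    rw [div_le_iff₀ ha] at this
    calc 1 * (2*L)^9 = 2^9 * L^9 := by ring
      _ ≤ (L*a) * L^9 := by gcongr
      _ = _ := by ring
  have hlow := hlower T (by rw [hlogT]; linarith) hT1 s (by rw [hlogT]; linarith) h2 ht.le hTT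
  rw [hlogT] at hlow
  have hzp : 0 < ‖riemannZeta s‖ := lt_of_lt_of_le (by positivity) hlow
  have hz : riemannZeta s ≠ 0 := norm_pos_iff.mp hzp
  have hs1 : s ≠ 1 := by rintro rfl; simp at ht; linarith
  have h7 : a/(2*L)^9 ≤ 1/(2*(2*L)) := by
    rw [div_le_div_iff₀ (by positivity) (by positivity)]
    have : (3:ℝ)^8 ≤ (2*L)^8 := by gcongr; linarith
    calc a * (2*(2*L)) ≤ 1 * (2*(2*L)) := by gcongr
      _ ≤ (2*L)^8 * (2*L) := by nlinarith
      _ = _ := by ring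
  have h8 : 1/(2*(2*L)) ≤ 1/(2*L) := by apply one_div_le_one_div_of_le <;> linarith
  have hd := zeta_deriv_bound (T := T) (by rw [hlogT]; linarith) hT1 (s := s) (by rw [hlogT]; linarith) h2 ht.le (by linarith)
  have hzb := zeta_bound (T := T) (by rw [hlogT]; linarith) hT1 (s := s) (by rw [hlogT]; linarith) (by linarith) (by linarith) (by linarith)
  rw [hlogT] at hd hzb
  refine ⟨by rw [Zf_of_ne hs1]; exact mul_ne_zero (sub_ne_zero.mpr hs1) hz, ?_⟩
  rw [Fz_eq hs1 hz]
  refine (norm_sub_le _ _).trans ?_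
  rw [norm_div, norm_neg]
  have h9 : ‖deriv riemannZeta s‖ / ‖riemannZeta s‖ ≤ 600/c * (2*L)^9 := by
    rw [div_le_iff₀ hzp]
    calc ‖deriv riemannZeta s‖ ≤ 600 * (2*L)^2 := hd
      _ = 600/c * (2*L)^9 * (c/(2*L)^7) := by field_simp
      _ ≤ _ := by gcongr
  have h10 : 2*L ≤ (2*L)^9 := le_self_pow₀ (by linarith) (by norm_num)
  calc _ ≤ 600/c * (2*L)^9 + 300 * (2*L)^9 := by linarith
    _ = (2^9*(600/c+300)) * L^9 := by ring
    _ ≤ L * L^9 := by gcongr; linarith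
    _ = L^10 := by ring

end MillsInd

namespace MillsInd
open Complex Filter MeasureTheory Set Topology

lemma line_sq_norm (σ t : ℝ) (h : 1 ≤ σ) : ‖((σ:ℂ) + t * I)^2‖ ≥ 1 + t^2 := by
  rw [norm_pow, ← normSq_eq_norm_sq, normSq_add_mul_I]
  nlinarith

lemma line_ne (σ t : ℝ) (h : 1 ≤ σ) : ((σ:ℂ) + t * I) ≠ 0 := by
  intro hh
  have := congrArg re hh
  simp at this; linarith

lemma inv_line_integrable (σ : ℝ) (h : 1 ≤ σ) :
    Integrable (fun t : ℝ => 1 / ((σ:ℂ) + t * I)^2) := by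
  refine (integrable_inv_one_add_sq).mono' ?_ ?_
  · apply Continuous.aestronglyMeasurable
    have : ∀ t : ℝ, ((σ:ℂ) + t * I)^2 ≠ 0 := fun t => pow_ne_zero _ (line_ne σ t h)
    fun_prop (disch := exact this _)
  · refine Eventually.of_forall fun t => ?_
    rw [norm_div, norm_one, one_div]
    exact inv_anti₀ (by positivity) (line_sq_norm σ t h)

lemma mellin_log (s : ℂ) (hs : 0 < s.re) :
    MellinConvergent (fun t => Real.log t • indicator (Ioc 0 1) (fun _ => 1 : ℝ → ℂ) t) s ∧
    mellin (fun t => Real.log t • indicator (Ioc 0 1) (fun _ => 1 : ℝ → ℂ) t) s = -1/s^2 := by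
  have hne : s ≠ 0 := by rintro rfl; simp at hs
  have h := mellin_hasDerivAt_of_isBigO_rpow (a := s.re+1) (b := 0) (s := s)
    (f := indicator (Ioc 0 1) (fun _ => 1 : ℝ → ℂ)) ?_ ?_ (by linarith) ?_ hs
  · refine ⟨h.1, ?_⟩
    have h2 : HasDerivAt (mellin (indicator (Ioc 0 1) (fun _ => 1 : ℝ → ℂ))) (-1/s^2) s := by
      have h3 := (hasDerivAt_inv hne)
      have : (-1/s^2) = -(s^2)⁻¹ := by field_simp
      rw [this]
      refine h3.congr_of_eventuallyEq ?_
      have ho : IsOpen {z : ℂ | 0 < z.re} := isOpen_lt continuous_const continuous_re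
      filter_upwards [ho.mem_nhds hs] with z hz
      rw [(hasMellin_one_Ioc hz).2, one_div]
    exact h.2.unique h2
  · apply Integrable.locallyIntegrable _ |>.locallyIntegrableOn
    rw [integrable_indicator_iff measurableSet_Ioc]
    exact integrableOn_const (by simp)
  · refine (Asymptotics.isBigO_zero (E' := ℂ) (fun t : ℝ => t ^ (-(s.re+1))) atTop).congr' ?_ EventuallyEq.rfl
    filter_upwards [eventually_gt_atTop 1] with t ht
    rw [indicator_of_notMem]
    simp [ht]
  · refine Asymptotics.IsBigO.of_bound 1 ?_
    refine Eventually.of_forall fun t => ?_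
    simp only [neg_zero, Real.rpow_zero, norm_one, mul_one]
    unfold indicator
    split_ifs <;> simp

lemma perron (σ : ℝ) (hσ : 1 ≤ σ) (u : ℝ) :
    ∫ t : ℝ, cexp (u * ((σ:ℂ) + t * I)) / ((σ:ℂ) + t * I)^2 = ((2 * Real.pi * max u 0 : ℝ) : ℂ) := by
  have h := mellinInv_mellin_eq σ
    (fun t => Real.log t • indicator (Ioc 0 1) (fun _ => 1 : ℝ → ℂ) t) (Real.exp_pos (-u))
    (mellin_log σ (by simp; linarith)).1 ?_ ?_
  · rw [mellinInv] at h
    have e1 : (∫ (y : ℝ), ((Real.exp (-u) : ℝ):ℂ) ^ (-((σ:ℂ) + y * I)) •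
        mellin (fun t => Real.log t • indicator (Ioc 0 1) (fun _ => 1 : ℝ → ℂ) t) (σ + y * I)) =
        - ∫ t : ℝ, cexp (u * ((σ:ℂ) + t * I)) / ((σ:ℂ) + t * I)^2 := by
      rw [← integral_neg]
      congr 1
      ext t
      rw [(mellin_log (σ + t * I) (by simp; linarith)).2, smul_eq_mul]
      rw [cpow_def_of_ne_zero (by simp), ← ofReal_log (Real.exp_pos _).le, Real.log_exp]
      have : ((-u : ℝ):ℂ) * (-((σ:ℂ) + t * I)) = u * ((σ:ℂ) + t * I) := by push_cast; ring
      rw [this]; ring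
    rw [e1] at h
    have e2 : (Real.log (Real.exp (-u)) • indicator (Ioc 0 1) (fun _ => 1 : ℝ → ℂ) (Real.exp (-u)))
       = -((max u 0 : ℝ):ℂ) := by
      rw [Real.log_exp]
      by_cases hu : 0 ≤ u
      · rw [indicator_of_mem (by simp [hu, Real.exp_pos]), max_eq_left hu]; simp
      · rw [indicator_of_notMem (by simp only [mem_Ioc, not_and, not_le]; intro _; rw [Real.one_lt_exp_iff]; linarith), max_eq_right (by linarith)]; simp
    rw [e2] at h
    have hp : (2 * Real.pi : ℂ) ≠ 0 := by simp [Real.pi_ne_zero]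
    rw [real_smul] at h
    push_cast at h ⊢
    have : ∀ z w : ℂ, 1 / (2 * Real.pi : ℂ) * (-z) = -w → z = 2 * Real.pi * w := by
      intro z w h; field_simp at h; linear_combination -h
    exact this _ _ h
  · unfold VerticalIntegrable
    refine (inv_line_integrable σ hσ).neg.congr (Eventually.of_forall fun t => ?_)
    simp only [Pi.neg_apply]
    rw [(mellin_log (σ + t * I) (by simp; linarith)).2]; ring
  · have hc : ContinuousAt (fun t : ℝ => ((min (Real.log t) 0 : ℝ) : ℂ)) (Real.exp (-u)) := by
      have : Real.exp (-u) ≠ 0 := (Real.exp_pos _).ne'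
      exact continuous_ofReal.continuousAt.comp ((Real.continuousAt_log this).min continuousAt_const)
    refine hc.congr ?_
    filter_upwards [lt_mem_nhds (Real.exp_pos (-u))] with t ht
    by_cases h1 : t ≤ 1
    · have hm : t ∈ Ioc (0:ℝ) 1 := ⟨ht, h1⟩
      rw [indicator_of_mem hm, min_eq_left (Real.log_nonpos ht.le h1)]; simp
    · rw [indicator_of_notMem (by simp [h1]), min_eq_right (Real.log_nonneg (by linarith))]; simp

end MillsInd

namespace MillsInd
open Complex Filter MeasureTheory Set Topology
open scoped ArithmeticFunction.vonMangoldt ArithmeticFunction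

noncomputable def av (n : ℕ) : ℂ := (ArithmeticFunction.vonMangoldt n : ℂ) - 1

lemma av_summable {s : ℂ} (hs : 1 < s.re) : LSeriesSummable av s := by
  have h1 := ArithmeticFunction.LSeriesSummable_vonMangoldt hs
  have h2 := LSeriesSummable_one_iff.mpr hs
  exact h1.sub h2

lemma av_LSeries {s : ℂ} (hs : 1 < s.re) : LSeries av s = Fz s := by
  have h1 := ArithmeticFunction.LSeriesSummable_vonMangoldt hs
  have h2 := LSeriesSummable_one_iff.mpr hs
  have h3 := LSeries_sub h1 h2
  have hne : s ≠ 1 := by rintro rfl; simp at hs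
  rw [Fz_eq hne (riemannZeta_ne_zero_of_one_lt_re hs), ← ArithmeticFunction.LSeries_vonMangoldt_eq_deriv_riemannZeta_div hs,
    ← LSeries_one_eq_riemannZeta hs, ← h3]
  rfl

/-- bound for the Dirichlet series on a vertical line -/
lemma av_norm_sum : ∃ C : ℝ, 1 ≤ C ∧ ∀ ε : ℝ, 0 < ε → ε ≤ 1 → 
    ∑' n, ‖LSeries.term av ((1 + ε : ℝ) : ℂ) n‖ ≤ C / ε^2 := by
  obtain ⟨C, hC1, hC⟩ := zeta_real_bound
  refine ⟨6 * C, by linarith, fun ε h0 h1 => ?_⟩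
  have hz : ∀ x : ℝ, 0 < x → ∑' n : ℕ, ‖LSeries.term 1 ((1 + x : ℝ) : ℂ) n‖ = ‖riemannZeta (1 + x)‖ := by
    intro x hx
    have hre : 1 < (1 + x : ℂ).re := by simp [hx]
    have h := LSeries_one_eq_riemannZeta hre
    have hr : ∀ n, ((‖LSeries.term 1 ((1 + x : ℝ) : ℂ) n‖ : ℝ) : ℂ) = LSeries.term 1 (1 + x) n := by
      intro n
      rw [LSeries.norm_term_eq, LSeries.term_def]
      split_ifs with hn
      · simp
      · simp only [Pi.one_apply, norm_one, ofReal_re]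
        push_cast
        rw [ofReal_cpow (by positivity)]
        push_cast; rfl
    have h5 : ((∑' n : ℕ, ‖LSeries.term 1 ((1 + x : ℝ) : ℂ) n‖ : ℝ) : ℂ) = riemannZeta (1 + x) := by
      rw [ofReal_tsum, ← h, LSeries]
      exact tsum_congr hr
    rw [← h5, norm_real, Real.norm_of_nonneg (tsum_nonneg fun n => norm_nonneg _)]
  have hs : ∀ x : ℝ, 0 < x → Summable (fun n : ℕ => ‖LSeries.term 1 ((1 + x : ℝ) : ℂ) n‖) := by
    intro x hx
    exact (LSeriesSummable_one_iff.mpr (by simp [hx] : 1 < ((1+x:ℝ):ℂ).re)).norm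
  have key : ∀ n : ℕ, ‖LSeries.term av ((1 + ε : ℝ) : ℂ) n‖ ≤ 
      2/ε * ‖LSeries.term 1 ((1 + ε/2 : ℝ) : ℂ) n‖ + ‖LSeries.term 1 ((1 + ε : ℝ) : ℂ) n‖ := by
    intro n
    simp only [LSeries.norm_term_eq]
    split_ifs with hn
    · simp
    · simp only [Pi.one_apply, norm_one, ofReal_re]
      have hnp : (0:ℝ) < n := by positivity
      have ha : ‖av n‖ ≤ 2/ε * (n:ℝ)^(ε/2) + 1 := by
        refine (norm_sub_le _ _).trans ?_
        rw [norm_real, Real.norm_of_nonneg ArithmeticFunction.vonMangoldt_nonneg, norm_one]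
        have h6 := Real.log_le_rpow_div hnp.le (half_pos h0)
        have h7 := ArithmeticFunction.vonMangoldt_le_log (n := n)
        have : (n:ℝ) ^ (ε/2) / (ε/2) = 2/ε * (n:ℝ)^(ε/2) := by field_simp
        linarith
      have e : (n:ℝ)^(1+ε) = (n:ℝ)^(1+ε/2) * (n:ℝ)^(ε/2) := by
        rw [← Real.rpow_add hnp]; ring_nf
      have p1 : 0 < (n:ℝ)^(1+ε/2) := by positivity
      have p2 : 0 < (n:ℝ)^(ε/2) := by positivity
      calc ‖av n‖ / (n:ℝ)^(1+ε) ≤ (2/ε * (n:ℝ)^(ε/2) + 1) / (n:ℝ)^(1+ε) := by gcongr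
        _ = _ := by rw [e]; field_simp
  have hsum2 := ((hs (ε/2) (by linarith)).mul_left (2/ε)).add (hs ε h0)
  have hsa : Summable (fun n => ‖LSeries.term av ((1 + ε : ℝ) : ℂ) n‖) :=
    (av_summable (by simp [h0] : 1 < ((1+ε:ℝ):ℂ).re)).norm
  have := hsa.tsum_le_tsum key hsum2
  rw [((hs (ε/2) (by linarith)).mul_left (2/ε)).tsum_add (hs ε h0), tsum_mul_left, hz _ (by linarith), hz _ h0] at this
  have b1 := hC (ε/2) (by linarith) (by linarith)
  have b2 := hC ε h0 (by linarith)
  refine this.trans ?_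
  calc _ ≤ 2/ε * (C/(ε/2)) + C/ε := by gcongr
    _ = 4 * C/ε^2 + C * ε/ε^2 := by field_simp; ring
    _ ≤ 4 * C/ε^2 + C * 1/ε^2 := by gcongr
    _ ≤ 6*C/ε^2 := by rw [← add_div]; gcongr; linarith

lemma term_norm_line (c t : ℝ) (n : ℕ) : ‖LSeries.term av ((c:ℂ) + t * I) n‖ = ‖LSeries.term av (c:ℂ) n‖ := by
  simp [LSeries.norm_term_eq]

lemma Fz_line_bound : ∃ C : ℝ, 1 ≤ C ∧ ∀ ε t : ℝ, 0 < ε → ε ≤ 1 → 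
    ‖Fz (((1 + ε : ℝ) : ℂ) + t * I)‖ ≤ C / ε^2 := by
  obtain ⟨C, hC1, hC⟩ := av_norm_sum
  refine ⟨C, hC1, fun ε t h0 h1 => ?_⟩
  have hre : 1 < (((1 + ε : ℝ) : ℂ) + t * I).re := by simp [h0]
  rw [← av_LSeries hre, LSeries]
  refine (norm_tsum_le_tsum_norm (av_summable hre).norm).trans ?_
  simp only [term_norm_line]
  exact hC ε h0 h1

/-- the smoothed sum, as a convergent series -/
noncomputable def S1 (y : ℝ) : ℝ := 
  ∑' n : ℕ, (if n = 0 then 0 else ArithmeticFunction.vonMangoldt n - 1) * max (y - Real.log n) 0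

lemma S1_summable (y : ℝ) : Summable 
    (fun n : ℕ => (if n = 0 then 0 else ArithmeticFunction.vonMangoldt n - 1) * max (y - Real.log n) 0) := by
  apply summable_of_ne_finset_zero (s := Finset.range (⌈Real.exp y⌉₊ + 1))
  intro n hn
  simp only [Finset.mem_range, not_lt] at hn
  have h1 : Real.exp y ≤ n := (Nat.le_ceil _).trans (by exact_mod_cast (by omega))
  have h2 : y ≤ Real.log n := by
    rw [Real.le_log_iff_exp_le (lt_of_lt_of_le (Real.exp_pos _) h1)]; exact h1
  rw [max_eq_right (by linarith), mul_zero]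

lemma S1_integral (y c : ℝ) (hc : 1 < c) : 
    ∫ t : ℝ, Fz ((c:ℂ) + t * I) * (cexp (y * ((c:ℂ) + t * I)) / ((c:ℂ) + t * I)^2) = ((2 * Real.pi * S1 y : ℝ) : ℂ) := by
  set k : ℝ → ℂ := fun t => cexp (y * ((c:ℂ) + t * I)) / ((c:ℂ) + t * I)^2 with hk
  have hne : ∀ t : ℝ, ((c:ℂ) + t * I)^2 ≠ 0 := fun t => pow_ne_zero _ (line_ne c t hc.le)
  have hkn : ∀ t, ‖k t‖ = Real.exp (y * c) * ‖1 / ((c:ℂ) + t * I)^2‖ := by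
    intro t; simp [hk, norm_exp, div_eq_mul_inv]
  have hkc : Continuous k := by rw [hk]; fun_prop (disch := exact hne _)
  have hki : Integrable k := by
    refine (((inv_line_integrable c hc.le).norm).const_mul (Real.exp (y*c))).mono' hkc.aestronglyMeasurable ?_
    exact Eventually.of_forall fun t => (hkn t).le
  set F : ℕ → ℝ → ℂ := fun n t => LSeries.term av ((c:ℂ) + t * I) n * k t with hF
  have hre : ∀ t : ℝ, 1 < ((c:ℂ) + t * I).re := by intro t; simp [hc]
  have hFc : ∀ n, Continuous (F n) := by
    intro n
    refine Continuous.mul ?_ hkc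
    simp only [LSeries.term_def]
    split_ifs with hn
    · exact continuous_const
    · have : ∀ t : ℝ, (n:ℂ) ^ ((c:ℂ) + t * I) ≠ 0 := fun t => by
        rw [Ne, cpow_eq_zero_iff]; simp [hn]
      refine Continuous.div continuous_const ?_ this
      exact Continuous.const_cpow (by fun_prop) (Or.inl (by exact_mod_cast hn))
  have hFi : ∀ n, Integrable (F n) := by
    intro n
    refine (hki.norm.const_mul ‖LSeries.term av (c:ℂ) n‖).mono' (hFc n).aestronglyMeasurable ?_
    refine Eventually.of_forall fun t => ?_
    rw [hF]; simp only [norm_mul, term_norm_line]; exact le_rfl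
  have hsum : Summable fun n => ∫ t, ‖F n t‖ := by
    have : ∀ n, ∫ t, ‖F n t‖ = ‖LSeries.term av (c:ℂ) n‖ * ∫ t, ‖k t‖ := by
      intro n
      rw [← integral_const_mul]
      congr 1; ext t
      rw [hF]; simp only [norm_mul, term_norm_line]
    simp only [this]
    exact ((av_summable (by simpa using hc : 1 < ((c:ℝ):ℂ).re)).norm).mul_right _
  have h := hasSum_integral_of_summable_integral_norm hFi hsum
  have e1 : ∀ t, ∑' n, F n t = Fz ((c:ℂ) + t * I) * k t := by
    intro t
    rw [hF]; simp only
    rw [tsum_mul_right, ← av_LSeries (hre t), LSeries]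
  simp only [e1] at h
  have e2 : ∀ n, ∫ t, F n t = ((2 * Real.pi * ((if n = 0 then 0 else ArithmeticFunction.vonMangoldt n - 1) * max (y - Real.log n) 0) : ℝ) : ℂ) := by
    intro n
    by_cases hn : n = 0
    · simp [hF, hn]
    · have : ∀ t, F n t = av n * (cexp (((y - Real.log n : ℝ) : ℂ) * ((c:ℂ) + t * I)) / ((c:ℂ) + t * I)^2) := by
        intro t
        rw [hF, hk]; simp only [LSeries.term_def, hn, if_false]
        rw [cpow_def_of_ne_zero (by exact_mod_cast hn), ← ofReal_natCast, ← ofReal_log (by positivity)]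
        have : ((y - Real.log n : ℝ) : ℂ) * ((c:ℂ) + t * I) = y * ((c:ℂ) + t * I) - Real.log n * ((c:ℂ) + t * I) := by push_cast; ring
        rw [this, Complex.exp_sub]; ring
      simp only [this]
      rw [integral_const_mul, perron c hc.le]
      simp only [hn, if_false, av]
      push_cast; ring
  simp only [e2] at h
  have h8 := ((S1_summable y).hasSum.mul_left (2 * Real.pi))
  have h9 : HasSum (fun n : ℕ => ((2 * Real.pi * ((if n = 0 then 0 else ArithmeticFunction.vonMangoldt n - 1) * max (y - Real.log n) 0) : ℝ) : ℂ)) ((2 * Real.pi * S1 y : ℝ) : ℂ) := by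
    exact_mod_cast h8
  exact h.unique h9

end MillsInd

namespace MillsInd
open Complex Filter MeasureTheory Set Topology

lemma arctan_tail {T : ℝ} (hT : 0 < T) : Real.pi / 2 - Real.arctan T ≤ 1 / T := by
  rw [← Real.arctan_inv_of_pos hT, one_div]
  have h0 : 0 ≤ Real.arctan T⁻¹ := Real.arctan_nonneg.mpr (by positivity)
  have := Real.le_tan h0 (Real.arctan_lt_pi_div_two _)
  rwa [Real.tan_arctan] at this

lemma contour (f : ℂ → ℂ) (a c T B1 B2 B3 : ℝ) (hac : a ≤ c) (hT : 0 < T) (hB1 : 0 ≤ B1)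
    (hd : ∀ s : ℂ, a ≤ s.re → s.re ≤ c → |s.im| ≤ T → DifferentiableAt ℂ f s)
    (hcont : Continuous fun t : ℝ => f ((c:ℂ) + t * I))
    (htail : ∀ t : ℝ, ‖f ((c:ℂ) + t * I)‖ ≤ B1 * (1 + t^2)⁻¹)
    (hhor : ∀ x t : ℝ, a ≤ x → x ≤ c → |t| = T → ‖f ((x:ℂ) + t * I)‖ ≤ B2)
    (hleft : ∀ t : ℝ, |t| ≤ T → ‖f ((a:ℂ) + t * I)‖ ≤ B3) :
    ‖∫ t : ℝ, f ((c:ℂ) + t * I)‖ ≤ 2 * (B1 * (1 / T)) + 2 * (B2 * (c - a)) + B3 * (2 * T) := by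
  set g : ℝ → ℂ := fun t => f ((c:ℂ) + t * I) with hg
  have hb : Integrable (fun t : ℝ => B1 * (1 + t^2)⁻¹) := integrable_inv_one_add_sq.const_mul _
  have hgi : Integrable g := hb.mono' hcont.aestronglyMeasurable (Eventually.of_forall htail)
  have e1 : (∫ t, g t) = (∫ t in Iic (-T), g t) + (∫ t in (-T)..T, g t) + ∫ t in Ioi T, g t := by
    rw [← intervalIntegral.integral_Iic_add_Ioi (b := T) hgi.integrableOn hgi.integrableOn,
      ← intervalIntegral.integral_Iic_sub_Iic (a := -T) hgi.integrableOn hgi.integrableOn]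
    ring
  have b1 : ‖∫ t in Iic (-T), g t‖ ≤ B1 * (1 / T) := by
    have := norm_integral_le_of_norm_le (μ := volume.restrict (Iic (-T))) hb.integrableOn
      (Eventually.of_forall htail)
    refine this.trans ?_
    rw [integral_const_mul, integral_Iic_inv_one_add_sq, Real.arctan_neg]
    gcongr
    linarith [arctan_tail hT]
  have b3 : ‖∫ t in Ioi T, g t‖ ≤ B1 * (1 / T) := by
    have := norm_integral_le_of_norm_le (μ := volume.restrict (Ioi T)) hb.integrableOn
      (Eventually.of_forall htail)
    refine this.trans ?_
    rw [integral_const_mul, integral_Ioi_inv_one_add_sq]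
    gcongr
    linarith [arctan_tail hT]
  have b2 : ‖∫ t in (-T)..T, g t‖ ≤ 2 * (B2 * (c - a)) + B3 * (2 * T) := by
    have h := Complex.integral_boundary_rect_eq_zero_of_differentiableOn f ⟨a, -T⟩ ⟨c, T⟩ ?_
    · simp only at h
      have n1 : ‖∫ x in a..c, f ((x:ℂ) + ((-T : ℝ):ℂ) * I)‖ ≤ B2 * (c - a) := by
        have := intervalIntegral.norm_integral_le_of_norm_le_const (a := a) (b := c) (C := B2)
          (f := fun x : ℝ => f ((x:ℂ) + ((-T : ℝ):ℂ) * I)) ?_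
        · rwa [abs_of_nonneg (by linarith)] at this
        · intro x hx
          rw [uIoc_of_le hac] at hx
          exact hhor x (-T) hx.1.le hx.2 (by rw [abs_neg, abs_of_pos hT])
      have n2 : ‖∫ x in a..c, f ((x:ℂ) + (T:ℂ) * I)‖ ≤ B2 * (c - a) := by
        have := intervalIntegral.norm_integral_le_of_norm_le_const (a := a) (b := c) (C := B2)
          (f := fun x : ℝ => f ((x:ℂ) + (T:ℂ) * I)) ?_
        · rwa [abs_of_nonneg (by linarith)] at this
        · intro x hx
          rw [uIoc_of_le hac] at hx
          exact hhor x T hx.1.le hx.2 (by rw [abs_of_pos hT])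
      have n3 : ‖∫ t in (-T)..T, f ((a:ℂ) + (t:ℂ) * I)‖ ≤ B3 * (2 * T) := by
        have := intervalIntegral.norm_integral_le_of_norm_le_const (a := -T) (b := T) (C := B3)
          (f := fun t : ℝ => f ((a:ℂ) + (t:ℂ) * I)) ?_
        · rw [abs_of_nonneg (by linarith)] at this
          refine this.trans (le_of_eq (by ring))
        · intro x hx
          rw [uIoc_of_le (by linarith)] at hx
          exact hleft x (abs_le.mpr ⟨hx.1.le, hx.2⟩)
      have e : I • ∫ t in (-T)..T, g t = I • (∫ t in (-T)..T, f ((a:ℂ) + (t:ℂ) * I)) 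
          + (∫ x in a..c, f ((x:ℂ) + (T:ℂ) * I)) - ∫ x in a..c, f ((x:ℂ) + ((-T : ℝ):ℂ) * I) := by
        linear_combination h
      have e' : ‖∫ t in (-T)..T, g t‖ = ‖I • ∫ t in (-T)..T, g t‖ := by simp
      rw [e', e]
      refine (norm_sub_le _ _).trans ?_
      refine (add_le_add_left (norm_add_le _ _) _).trans ?_
      rw [norm_smul, norm_I, one_mul]
      linarith
    · intro s hs
      rw [mem_reProdIm] at hs
      simp only at hs
      rw [uIcc_of_le hac, uIcc_of_le (by linarith)] at hs
      exact (hd s hs.1.1 hs.1.2 (abs_le.mpr hs.2)).differentiableWithinAt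
  rw [e1]
  refine (norm_add_le _ _).trans ?_
  refine (add_le_add_left (norm_add_le _ _) _).trans ?_
  linarith

lemma eventual_exp (K : ℝ) (n : ℕ) : ∃ L1 : ℝ, ∀ L ≥ L1, K * L^n ≤ Real.exp (L/2) := by
  have h := (Real.tendsto_pow_mul_exp_neg_atTop_nhds_zero n).const_mul (|K| * 2^n)
  rw [mul_zero] at h
  have h2 := h.comp (tendsto_id.atTop_div_const (show (0:ℝ) < 2 by norm_num))
  obtain ⟨L1, hL1⟩ := eventually_atTop.mp ((h2.eventually (gt_mem_nhds one_pos)).and (eventually_ge_atTop 0))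
  refine ⟨L1, fun L hL => ?_⟩
  obtain ⟨h3, h4⟩ := hL1 L hL
  simp only [Function.comp, id] at h3
  rw [Real.exp_neg, div_pow] at h3
  have hp := Real.exp_pos (L/2)
  have : |K| * 2^n * (L^n/2^n * (Real.exp (L/2))⁻¹) = |K| * L^n / Real.exp (L/2) := by field_simp
  rw [this, div_lt_one hp] at h3
  have := le_abs_self K
  nlinarith [pow_nonneg h4 n]

set_option maxHeartbeats 1600000 in
theorem S1_bound : ∃ L1 : ℝ, 3 ≤ L1 ∧ ∀ L ≥ L1, |S1 (L^20)| ≤ Real.exp (L^20 - L/2) := by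
  obtain ⟨C, hC1, hC⟩ := Fz_line_bound
  obtain ⟨L0, hL0, hzf⟩ := zero_free
  obtain ⟨L2, hL2⟩ := eventual_exp (48 * C * Real.exp 1) 40
  refine ⟨max L0 L2, le_max_of_le_left hL0, fun L hL => ?_⟩
  have hLL0 : L0 ≤ L := (le_max_left _ _).trans hL
  have hL3 : 3 ≤ L := hL0.trans hLL0
  have hbig := hL2 L ((le_max_right _ _).trans hL)
  set y := L^20 with hy
  set T := Real.exp L with hT
  set η := 1/L^10 with hη
  have hL10 : 3 ^ 10 ≤ L ^ 10 := by gcongr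
  have hL10' : 3 * L ≤ L ^ 10 := by
    calc 3 * L ≤ 3^9 * L := by nlinarith
      _ ≤ L^9 * L := by gcongr
      _ = L^10 := by ring
  have hypos : 1 ≤ y := one_le_pow₀ (by linarith)
  have hyinv : 0 < 1/y := by positivity
  have hyinv1 : 1/y ≤ 1 := by rw [div_le_one (by linarith)]; exact hypos
  have hη0 : 0 < η := by positivity
  have hη1 : η ≤ 1/2 := by
    rw [hη]; rw [div_le_div_iff₀ (by positivity) (by norm_num)]; linarith
  have hyη : y * η = L^10 := by rw [hy, hη]; field_simp
  have hTpos : 0 < T := Real.exp_pos _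
  have hz := hzf L hLL0
  have hc1 : (1:ℝ) < 1 + 1/y := by linarith
  have hyc : y * (1 + 1/y) = y + 1 := by field_simp
  have hE : ∀ s : ℂ, ‖cexp (y * s)‖ = Real.exp (y * s.re) := by
    intro s; rw [norm_exp]; simp
  have hne : ∀ s : ℂ, 1/2 ≤ s.re → s ≠ 0 := by
    rintro s h rfl; norm_num at h
  have hfd : ∀ s : ℂ, 1/2 ≤ s.re → Zf s ≠ 0 → DifferentiableAt ℂ (fun s => Fz s * (cexp (y * s) / s^2)) s := by
    intro s h1 h2
    have h3 := Fz_diff h2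
    have h4 := pow_ne_zero 2 (hne s h1)
    refine h3.mul (DifferentiableAt.div ?_ ?_ h4) <;> fun_prop
  have hmain := contour (fun s => Fz s * (cexp (y * s) / s^2)) (1 - η) (1 + 1/y) T
    (C * y^2 * Real.exp (y+1)) (L^10 * Real.exp (y+1) / T^2) (4 * L^10 * Real.exp (y - L^10))
    (by linarith) hTpos (by positivity) ?_ ?_ ?_ ?_ ?_
  · rw [S1_integral y _ hc1, norm_real, Real.norm_eq_abs, abs_mul, abs_of_pos Real.two_pi_pos] at hmain
    have h1 : |S1 y| ≤ 2 * Real.pi * |S1 y| := by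
      have := Real.pi_gt_three
      nlinarith [abs_nonneg (S1 y)]
    refine h1.trans (hmain.trans ?_)
    have hy2 : y^2 = L^40 := by rw [hy]; ring
    have hT1 : 1/T = Real.exp (-L/2) * Real.exp (-L/2) := by
      rw [hT, one_div, ← Real.exp_neg, ← Real.exp_add]; ring_nf
    have hT2 : Real.exp (L/2) * Real.exp (-L/2) = 1 := by
      rw [← Real.exp_add]; ring_nf; exact Real.exp_zero
    have hgoal : Real.exp (y - L/2) = Real.exp y * Real.exp (-L/2) := by
      rw [← Real.exp_add]; ring_nf
    have hy1 : Real.exp (y+1) = Real.exp y * Real.exp 1 := Real.exp_add _ _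
    set E := Real.exp (-L/2) with hEE
    have hEpos : 0 < E := Real.exp_pos _
    have hE1 : E ≤ 1 := Real.exp_le_one_iff.mpr (by linarith)
    have hbig2 : 48 * C * Real.exp 1 * L^40 * E ≤ 1 := by
      calc _ ≤ Real.exp (L/2) * E := by gcongr
        _ = 1 := hT2
    have he1 : 1 ≤ Real.exp 1 := Real.one_le_exp (by norm_num)
    have hL1040 : L^10 ≤ L^40 := pow_le_pow_right₀ (by linarith) (by norm_num)
    have hbig3 : 48 * Real.exp 1 * L^10 * E ≤ 1 := by
      refine le_trans ?_ hbig2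
      have : 48 * Real.exp 1 * L^10 ≤ 48 * C * Real.exp 1 * L^40 := by
        calc 48 * Real.exp 1 * L^10 = 48 * 1 * Real.exp 1 * L^10 := by ring
          _ ≤ _ := by gcongr
      gcongr
    have t1 : 2 * (C * y^2 * Real.exp (y+1) * (1/T)) ≤ (1/4) * (Real.exp y * E) := by
      rw [hy2, hy1, hT1]
      calc _ = (48 * C * Real.exp 1 * L^40 * E) * (Real.exp y * E) / 24 := by ring
        _ ≤ 1 * (Real.exp y * E) / 24 := by gcongr
        _ ≤ _ := by nlinarith [mul_pos (Real.exp_pos y) hEpos]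
    have t2 : 2 * (L^10 * Real.exp (y+1) / T^2 * (1 + 1/y - (1 - η))) ≤ (1/4) * (Real.exp y * E) := by
      have : L^10 * Real.exp (y+1) / T^2 = L^10 * Real.exp (y+1) * (1/T)*(1/T) := by field_simp
      rw [this, hy1, hT1]
      calc _ ≤ 2 * (L^10 * (Real.exp y * Real.exp 1) * (E*E) * (E * E) * 2) := by gcongr; linarith
        _ = (48 * Real.exp 1 * L^10 * E) * (Real.exp y * E) * (E * E) / 12 := by ring
        _ ≤ 1 * (Real.exp y * E) * (1 * 1) / 12 := by gcongr
        _ ≤ _ := by nlinarith [mul_pos (Real.exp_pos y) hEpos]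
    have t3 : 4 * L^10 * Real.exp (y - L^10) * (2 * T) ≤ (1/4) * (Real.exp y * E) := by
      have : Real.exp (y - L^10) * T ≤ Real.exp y * E * E := by
        rw [hT, hEE, ← Real.exp_add, ← Real.exp_add, ← Real.exp_add]
        apply Real.exp_le_exp.mpr; linarith
      calc _ = 8 * L^10 * (Real.exp (y - L^10) * T) := by ring
        _ ≤ 8 * L^10 * (Real.exp y * E * E) := by gcongr
        _ = (48 * 1 * L^10 * E) * (Real.exp y * E) / 6 := by ring
        _ ≤ (48 * Real.exp 1 * L^10 * E) * (Real.exp y * E) / 6 := by gcongr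
        _ ≤ 1 * (Real.exp y * E) / 6 := by gcongr
        _ ≤ _ := by nlinarith [mul_pos (Real.exp_pos y) hEpos]
    rw [hgoal]
    nlinarith [mul_pos (Real.exp_pos y) hEpos]
  · intro s h1 h2 h3
    exact hfd s (by linarith) (hz s h1 (by linarith) h3).1
  · rw [continuous_iff_continuousAt]
    intro t
    have hre : (((1 + 1/y : ℝ):ℂ) + t * I).re = 1 + 1/y := by simp
    have h := hfd (((1 + 1/y : ℝ):ℂ) + t * I) (by rw [hre]; linarith) (Zf_ne_zero (by rw [hre]; linarith))
    have h5 : ContinuousAt (fun t : ℝ => ((1 + 1/y : ℝ):ℂ) + t * I) t := by fun_prop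
    exact ContinuousAt.comp (f := fun t : ℝ => ((1 + 1/y : ℝ):ℂ) + t * I) h.continuousAt h5
  · intro t
    have hre : (((1 + 1/y : ℝ):ℂ) + t * I).re = 1 + 1/y := by simp
    rw [norm_mul, norm_div, hE, hre, hyc]
    have h1 := hC (1/y) t hyinv hyinv1
    have h2 := line_sq_norm (1+1/y) t hc1.le
    have : C / (1/y)^2 = C * y^2 := by field_simp
    rw [this] at h1
    calc _ ≤ C * y^2 * (Real.exp (y+1) / (1 + t^2)) := by gcongr
      _ = _ := by rw [div_eq_mul_inv]; ring
  · intro x t h1 h2 h3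
    have hre : ((x:ℂ) + t * I).re = x := by simp
    have him : ((x:ℂ) + t * I).im = t := by simp
    have h4 := (hz ((x:ℂ) + t * I) (by rw [hre]; exact h1) (by rw [hre]; linarith) (by rw [him, h3])).2
    rw [norm_mul, norm_div, hE, hre, mul_div_assoc]
    have h5 : T^2 ≤ ‖((x:ℂ) + t * I)^2‖ := by
      rw [norm_pow]
      gcongr
      rw [← h3]
      have := abs_im_le_norm ((x:ℂ) + t * I)
      rwa [him] at this
    have h6 : y * x ≤ y + 1 := by rw [← hyc]; gcongr
    gcongr
  · intro t h3
    have hre : (((1 - η : ℝ):ℂ) + t * I).re = 1 - η := by simp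
    have him : (((1 - η : ℝ):ℂ) + t * I).im = t := by simp
    have h4 := (hz (((1 - η : ℝ):ℂ) + t * I) (by rw [hre]) (by rw [hre]; linarith) (by rw [him]; exact h3)).2
    rw [norm_mul, norm_div, hE, hre]
    have h5 : 1/4 ≤ ‖(((1 - η : ℝ):ℂ) + t * I)^2‖ := by
      rw [norm_pow]
      have := abs_re_le_norm (((1 - η : ℝ):ℂ) + t * I)
      rw [hre, abs_of_pos (by linarith)] at this
      nlinarith
    have h6 : y * (1 - η) = y - L^10 := by rw [mul_sub, hyη]; ring
    rw [h6]
    calc _ ≤ L^10 * (Real.exp (y - L^10) / (1/4)) := by gcongr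
      _ = _ := by ring

end MillsInd

namespace MillsInd
open Filter

noncomputable def wt (y h x : ℝ) : ℝ := max (y + h - x) 0 - 2 * max (y - x) 0 + max (y - h - x) 0

lemma wt_nonneg (y h x : ℝ) (hh : 0 < h) : 0 ≤ wt y h x := by
  unfold wt
  rcases max_cases (y + h - x) 0 with h1 | h1 <;> rcases max_cases (y - x) 0 with h2 | h2 <;>
    rcases max_cases (y - h - x) 0 with h3 | h3 <;> linarith

lemma wt_le (y h x : ℝ) (hh : 0 < h) : wt y h x ≤ h := by
  unfold wt
  rcases max_cases (y + h - x) 0 with h1 | h1 <;> rcases max_cases (y - x) 0 with h2 | h2 <;>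
    rcases max_cases (y - h - x) 0 with h3 | h3 <;> linarith

lemma wt_zero (y h x : ℝ) (hh : 0 < h) (hx : h ≤ |x - y|) : wt y h x = 0 := by
  unfold wt
  rcases le_abs.mp hx with hx | hx <;>
  rcases max_cases (y + h - x) 0 with h1 | h1 <;> rcases max_cases (y - x) 0 with h2 | h2 <;>
    rcases max_cases (y - h - x) 0 with h3 | h3 <;> linarith

lemma wt_ge (y h x : ℝ) (hh : 0 < h) (hx : y ≤ x) (hx2 : x ≤ y + h / 2) : h / 2 ≤ wt y h x := by
  unfold wt
  rcases max_cases (y + h - x) 0 with h1 | h1 <;> rcases max_cases (y - x) 0 with h2 | h2 <;>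
    rcases max_cases (y - h - x) 0 with h3 | h3 <;> linarith

lemma D_eq (y h : ℝ) (hh : 0 < h) : S1 (y + h) - 2 * S1 y + S1 (y - h) =
    ∑ n ∈ Finset.Ioc 0 ⌊Real.exp (y + h)⌋₊, (ArithmeticFunction.vonMangoldt n - 1) * wt y h (Real.log n) := by
  have h1 := (((S1_summable (y + h)).hasSum.sub ((S1_summable y).hasSum.mul_left 2)).add (S1_summable (y - h)).hasSum).tsum_eq
  change _ = S1 (y + h) - 2 * S1 y + S1 (y - h) at h1
  rw [← h1, tsum_eq_sum (s := Finset.Ioc 0 ⌊Real.exp (y + h)⌋₊)]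
  · apply Finset.sum_congr rfl
    intro n hn
    have : n ≠ 0 := by have := (Finset.mem_Ioc.mp hn).1; omega
    simp only [this, if_false, wt]; ring
  · intro n hn
    by_cases h0 : n = 0
    · simp [h0]
    · simp only [h0, if_false]
      have h2 : Real.exp (y + h) < n := by
        have : ¬ n ≤ ⌊Real.exp (y + h)⌋₊ := fun h => hn (Finset.mem_Ioc.mpr ⟨by omega, h⟩)
        exact Nat.lt_of_floor_lt (by omega)
      have h3 : y + h < Real.log n := by
        rw [Real.lt_log_iff_exp_lt (by positivity)]; exact h2
      rw [max_eq_right (by linarith), max_eq_right (by linarith), max_eq_right (by linarith)]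
      simp

lemma D_upper (y h : ℝ) (hh : 0 < h) (hy : 0 ≤ y) 
    (hno : ∀ q : ℕ, q.Prime → h ≤ |Real.log q - y|) :
    S1 (y + h) - 2 * S1 y + S1 (y - h) ≤ h * (2 * √(Real.exp (y + h)) * (y + h)) - h / 2 * (Real.exp y * (h / 2) - 1) := by
  rw [D_eq y h hh]
  set N := ⌊Real.exp (y + h)⌋₊ with hN
  have e : ∑ n ∈ Finset.Ioc 0 N, (ArithmeticFunction.vonMangoldt n - 1) * wt y h (Real.log n) 
     = ∑ n ∈ Finset.Ioc 0 N, ArithmeticFunction.vonMangoldt n * wt y h (Real.log n) - ∑ n ∈ Finset.Ioc 0 N, wt y h (Real.log n) := by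
    rw [← Finset.sum_sub_distrib]
    exact Finset.sum_congr rfl fun n _ => by ring
  rw [e]
  have u1 : ∑ n ∈ Finset.Ioc 0 N, ArithmeticFunction.vonMangoldt n * wt y h (Real.log n) ≤ h * (2 * √(Real.exp (y + h)) * (y + h)) := by
    have h1 := Chebyshev.psi_sub_theta_le (x := Real.exp (y+h)) (Real.one_le_exp (by linarith))
    rw [Chebyshev.psi_sub_theta_eq_sum_not_prime, Real.log_exp] at h1
    refine le_trans ?_ (mul_le_mul_of_nonneg_left h1 hh.le)
    rw [Finset.sum_filter, Finset.mul_sum]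
    apply Finset.sum_le_sum
    intro n _
    split_ifs with hp
    · rw [wt_zero y h _ hh (hno n hp)]; simp
    · rw [mul_comm]
      have := wt_le y h (Real.log n) hh
      have := ArithmeticFunction.vonMangoldt_nonneg (n := n)
      gcongr
  have u2 : h / 2 * (Real.exp y * (h / 2) - 1) ≤ ∑ n ∈ Finset.Ioc 0 N, wt y h (Real.log n) := by
    have hsub : Finset.Ioc ⌊Real.exp y⌋₊ ⌊Real.exp (y + h/2)⌋₊ ⊆ Finset.Ioc 0 N := by
      apply Finset.Ioc_subset_Ioc (Nat.zero_le _)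
      apply Nat.floor_mono
      apply Real.exp_le_exp.mpr; linarith
    refine le_trans ?_ (Finset.sum_le_sum_of_subset_of_nonneg hsub fun n _ _ => wt_nonneg y h _ hh)
    have h2 : ∀ n ∈ Finset.Ioc ⌊Real.exp y⌋₊ ⌊Real.exp (y + h/2)⌋₊, h / 2 ≤ wt y h (Real.log n) := by
      intro n hn
      rw [Finset.mem_Ioc] at hn
      have h3 : Real.exp y < n := Nat.lt_of_floor_lt hn.1
      have h4 : (n:ℝ) ≤ Real.exp (y + h/2) := (Nat.le_floor_iff (Real.exp_pos _).le).mp hn.2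
      have hn0 : (0:ℝ) < n := (Real.exp_pos _).trans h3
      exact wt_ge y h _ hh ((Real.le_log_iff_exp_le hn0).mpr h3.le) ((Real.log_le_iff_le_exp hn0).mpr h4)
    refine le_trans ?_ (Finset.card_nsmul_le_sum _ _ _ h2)
    rw [Nat.card_Ioc, nsmul_eq_mul, mul_comm]
    gcongr
    have h5 : Real.exp (y + h/2) < ⌊Real.exp (y + h/2)⌋₊ + 1 := Nat.lt_floor_add_one _
    have h6 : (⌊Real.exp y⌋₊:ℝ) ≤ Real.exp y := Nat.floor_le (Real.exp_pos _).le
    have h7 : Real.exp y * (1 + h/2) ≤ Real.exp (y + h/2) := by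
      rw [Real.exp_add]
      gcongr
      linarith [Real.add_one_le_exp (h/2)]
    rw [Nat.cast_sub (Nat.floor_mono (Real.exp_le_exp.mpr (by linarith)))]
    linarith
  linarith

lemma S1_near : ∃ L1 : ℝ, 3 ≤ L1 ∧ ∀ L ≥ L1, ∀ z : ℝ, |z - L^20| ≤ 1 → |S1 z| ≤ Real.exp (L^20 + 1 - L/4) := by
  obtain ⟨L1, h3, hL1⟩ := S1_bound
  refine ⟨2 * L1, by linarith, fun L hL z hz => ?_⟩
  have hL6 : 6 ≤ L := by linarith
  rw [abs_le] at hz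
  have hbig : (L/2)^20 ≤ z := by
    have h1 : 6^20 ≤ L^20 := by gcongr
    have : (L/2)^20 = L^20/2^20 := by rw [div_pow]
    rw [this, div_le_iff₀ (by norm_num)]
    nlinarith
  have hz0 : 0 ≤ z := le_trans (by positivity) hbig
  set M := z ^ ((1:ℝ)/20) with hM
  have hMz : M^20 = z := by
    rw [hM, ← Real.rpow_natCast, ← Real.rpow_mul hz0]; norm_num
  have hML : L/2 ≤ M := by
    by_contra h
    push Not at h
    have hM0 : 0 ≤ M := Real.rpow_nonneg hz0 _
    have : M^20 < (L/2)^20 := by gcongr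
    linarith
  have := hL1 M (by linarith)
  rw [hMz] at this
  refine this.trans (Real.exp_le_exp.mpr ?_)
  linarith

set_option maxHeartbeats 1600000 in
theorem gap_log : ∃ L2 : ℝ, ∀ L ≥ L2, ∃ q : ℕ, q.Prime ∧ |Real.log q - L^20| < Real.exp (-L/16) := by
  obtain ⟨L1, h3, hL1⟩ := S1_near
  obtain ⟨L3, hL3⟩ := eventual_exp 600 20
  refine ⟨max L1 (max L3 100), fun L hL => ?_⟩
  have hL1' : L1 ≤ L := (le_max_left _ _).trans hL
  have hL3' : L3 ≤ L := (le_max_left _ _).trans ((le_max_right _ _).trans hL)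
  have hL100 : 100 ≤ L := (le_max_right _ _).trans ((le_max_right _ _).trans hL)
  by_contra hcon
  push Not at hcon
  set h := Real.exp (-L/16) with hh
  have h0 : 0 < h := Real.exp_pos _
  have h1 : h ≤ 1 := Real.exp_le_one_iff.mpr (by linarith)
  have hy1 : 1 ≤ L^20 := one_le_pow₀ (by linarith)
  have hD := D_upper (L^20) h h0 (by linarith) hcon
  have b1 := hL1 L hL1' (L^20 + h) (by rw [add_sub_cancel_left, abs_of_pos h0]; exact h1)
  have b2 := hL1 L hL1' (L^20) (by simp)
  have b3 := hL1 L hL1' (L^20 - h) (by rw [sub_sub_cancel_left, abs_neg, abs_of_pos h0]; exact h1)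
  rw [abs_le] at b1 b2 b3
  have hL20 : L ≤ L^20 := by
    calc L = L^1 := (pow_one L).symm
      _ ≤ L^20 := pow_le_pow_right₀ (by linarith) (by norm_num)
  have hbig := hL3 L hL3'
  set y := L^20 with hy
  -- everything relative to exp y
  have e1 : Real.exp (y + 1 - L/4) = Real.exp 1 * h^4 * Real.exp y := by
    rw [hh, ← Real.exp_nat_mul, ← Real.exp_add, ← Real.exp_add]; congr 1; push_cast; ring
  have e2 : √(Real.exp (y + h)) ≤ Real.exp 1 * Real.exp (y/2) := by
    rw [← Real.exp_add, Real.sqrt_le_left (Real.exp_pos _).le, ← Real.exp_nat_mul]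
    apply Real.exp_le_exp.mpr; push_cast; linarith
  have he3 : Real.exp 1 < 3 := by have := Real.exp_one_lt_d9; linarith
  have hE : Real.exp (y/2) * Real.exp (y/2) = Real.exp y := by rw [← Real.exp_add]; ring_nf
  -- h^2 small
  have hh2 : h^2 ≤ 1/150 := by
    have : h^2 = Real.exp (-(L/8)) := by rw [hh, ← Real.exp_nat_mul]; congr 1; push_cast; ring
    rw [this, Real.exp_neg, one_div]
    apply inv_anti₀ (by norm_num)
    have hh5 : (2.7:ℝ) ≤ Real.exp 1 := by have := Real.exp_one_gt_d9; linarith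
    calc (150:ℝ) ≤ (2.7)^12 := by norm_num
      _ ≤ (Real.exp 1)^12 := by gcongr
      _ = Real.exp 12 := by rw [← Real.exp_nat_mul]; norm_num
      _ ≤ _ := Real.exp_le_exp.mpr (by linarith)
  -- exp(y/2) h large compared with y
  have hby : 600 * y ≤ h * Real.exp (y/2) * 1 := by
    have hb2 := hbig
    have : Real.exp (L/2) ≤ h * Real.exp (y/2) := by
      rw [hh, ← Real.exp_add]
      apply Real.exp_le_exp.mpr
      have : 100 * L ≤ y := by
        calc 100 * L ≤ L * L := by gcongr
          _ = L^2 := by ring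
          _ ≤ L^20 := pow_le_pow_right₀ (by linarith) (by norm_num)
      linarith
    linarith
  set x := Real.exp (y/2) with hx
  have hxpos : 0 < x := Real.exp_pos _
  rw [← hE] at hD e1
  have hyh : y + h ≤ 2 * y := by linarith
  have u1 : h * (2 * √(Real.exp (y + h)) * (y + h)) ≤ h * (2 * (3 * x) * (2 * y)) := by
    gcongr
    exact e2.trans (by gcongr)
  have u2 : Real.exp 1 * h^4 * (x * x) ≤ 3 * h^4 * (x*x) := by gcongr
  -- combine
  have c1 : h / 2 * (x * x * (h/2) - 1) ≤ h * (12 * x * y) + 12 * h^4 * (x * x) := by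
    nlinarith
  have c2 : 12 * h^4 * (x*x) ≤ 12/150 * (h*x)^2 := by
    have : 12 * h^4 * (x*x) = 12 * h^2 * (h*x)^2 := by ring
    rw [this]
    have := sq_nonneg (h*x)
    nlinarith
  have c3 : h * (12 * x * y) ≤ 12/600 * (h*x)^2 := by
    have : h * (12*x*y) = 12/600 * (h*x) * (600 * y) := by ring
    rw [this]
    have hp : 0 < h*x := by positivity
    nlinarith
  have c4 : h / 2 ≤ 1/600 * (h*x)^2 := by
    have hp : 600 ≤ h*x := by linarith
    nlinarith
  have hp : 0 < (h*x)^2 := by positivity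
  nlinarith

/-- Primes in short intervals. -/
theorem prime_gap : ∃ X0 : ℝ, 2 ≤ X0 ∧ ∀ X ≥ X0, ∃ q : ℕ, q.Prime ∧ X < q ∧
    (q:ℝ) < X * (1 + 4 * Real.exp (-(Real.log X)^((1:ℝ)/20)/16)) := by
  obtain ⟨L2, hL2⟩ := gap_log
  refine ⟨Real.exp ((max L2 16)^20), ?_, fun X hX => ?_⟩
  · have h1 : (1:ℝ) ≤ (max L2 16)^20 := one_le_pow₀ (le_max_of_le_right (by norm_num))
    linarith [Real.add_one_le_exp ((max L2 16)^20)]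
  have hX0 : 0 < X := (Real.exp_pos _).trans_le hX
  have hlog : (max L2 16)^20 ≤ Real.log X := (Real.le_log_iff_exp_le hX0).mpr hX
  have hm : (16:ℝ) ≤ max L2 16 := le_max_right _ _
  have hlog0 : 0 ≤ Real.log X := le_trans (by positivity) hlog
  have hroot : max L2 16 ≤ (Real.log X)^((1:ℝ)/20) := by
    have h1 := Real.rpow_le_rpow (by positivity) hlog (show (0:ℝ) ≤ 1/20 by norm_num)
    rw [← Real.rpow_natCast, ← Real.rpow_mul (by linarith)] at h1
    norm_num at h1 ⊢
    exact h1
  set M := (Real.log X)^((1:ℝ)/20) with hM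
  set h := Real.exp (-M/16) with hh
  have h0 : 0 < h := Real.exp_pos _
  set y := Real.log X + h with hy
  set L := y^((1:ℝ)/20) with hL
  have hy0 : 0 ≤ y := by linarith
  have hLy : L^20 = y := by rw [hL, ← Real.rpow_natCast, ← Real.rpow_mul hy0]; norm_num
  have hML : M ≤ L := Real.rpow_le_rpow hlog0 (by linarith) (by norm_num)
  obtain ⟨q, hq, hb⟩ := hL2 L ((le_max_left _ _).trans (hroot.trans hML))
  rw [hLy] at hb
  have hb2 : |Real.log q - y| < h := hb.trans_le (Real.exp_le_exp.mpr (by linarith))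
  rw [abs_lt] at hb2
  have hq0 : (0:ℝ) < q := by exact_mod_cast hq.pos
  refine ⟨q, hq, ?_, ?_⟩
  · rw [← Real.log_lt_log_iff hX0 hq0]; linarith
  · have h3 : Real.log q < Real.log X + 2 * h := by linarith
    have h4 : (q:ℝ) < X * Real.exp (2 * h) := by
      rw [← Real.log_lt_log_iff hq0 (by positivity), Real.log_mul hX0.ne' (Real.exp_pos _).ne', Real.log_exp]
      exact h3
    have hh2 : h ≤ 1/2 := by
      have : h ≤ Real.exp (-1) := Real.exp_le_exp.mpr (by linarith)
      have h5 := Real.exp_one_gt_d9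
      rw [Real.exp_neg] at this
      refine this.trans ?_
      rw [one_div]; apply inv_anti₀ (by norm_num); linarith
    refine h4.trans_le ?_
    gcongr
    have h6 := Real.abs_exp_sub_one_le (x := 2 * h) (by rw [abs_of_pos (by linarith)]; linarith)
    rw [abs_of_pos (by linarith : 0 < 2 * h)] at h6
    linarith [le_abs_self (Real.exp (2*h) - 1)]

end MillsInd

namespace MillsInd
open Filter

def nn (k : ℕ) : ℕ := 3 ^ Nat.factorial k
def mm (k : ℕ) : ℕ := 3 ^ (k * Nat.factorial k)

lemma nn_succ (k : ℕ) : nn (k+1) = nn k * mm k := by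
  unfold nn mm
  rw [← pow_add, Nat.factorial_succ]; ring_nf

lemma mm_eq (k : ℕ) : mm k = nn k ^ k := by
  unfold nn mm
  rw [← pow_mul, mul_comm]

lemma nn_pos (k : ℕ) : 0 < nn k := by unfold nn; positivity
lemma mm_pos (k : ℕ) : 0 < mm k := by unfold mm; positivity

lemma nn_ge (k : ℕ) : k ≤ nn k := 
  (Nat.self_le_factorial k).trans (Nat.lt_pow_self (by norm_num)).le

lemma nn_le_mm {k : ℕ} (hk : 1 ≤ k) : nn k ≤ mm k := by
  rw [mm_eq]; exact Nat.le_self_pow (by omega) _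

lemma nn_dvd {j k : ℕ} (h : j ≤ k) : nn j ∣ nn k := pow_dvd_pow 3 (Nat.factorial_le h)

/-- one step of the chain, quantitative -/
lemma step (R : ℕ) : ∃ K : ℕ, ∀ k ≥ K, ∀ q : ℕ, 2 ≤ q → ∃ q' : ℕ, q'.Prime ∧ q ^ mm k < q' ∧ 
    (q':ℝ) + 1 < (q:ℝ)^(mm k) * (1 + Real.exp (-(nn k : ℝ)^R)) := by
  obtain ⟨X0, hX02, hX0⟩ := prime_gap
  refine ⟨max (⌈X0⌉₊) (20 * (R+1) + 100), fun k hk q hq => ?_⟩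
  have hk1 : ⌈X0⌉₊ ≤ k := (le_max_left _ _).trans hk
  have hk2 : 20 * (R+1) + 100 ≤ k := (le_max_right _ _).trans hk
  set N := nn k with hN
  set m := mm k with hm
  have hNk : k ≤ N := nn_ge k
  have hNm : N ≤ m := nn_le_mm (by omega)
  have hN100 : (100:ℝ) ≤ N := by exact_mod_cast (by omega : 100 ≤ N)
  have hqm : m < q ^ m := Nat.lt_pow_self (by omega)
  have hq0 : (0:ℝ) < q := by positivity
  have hX : X0 ≤ (q:ℝ)^m := by
    refine (Nat.le_ceil _).trans ?_
    exact_mod_cast (by omega : ⌈X0⌉₊ ≤ q^m)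
  obtain ⟨q', hq', h1, h2⟩ := hX0 _ hX
  refine ⟨q', hq', by exact_mod_cast h1, ?_⟩
  have hXpos : (0:ℝ) < (q:ℝ)^m := by positivity
  -- log lower bound
  have hlog2 : (1:ℝ)/2 ≤ Real.log q := by
    have : Real.log 2 ≤ Real.log q := Real.log_le_log (by norm_num) (by exact_mod_cast hq)
    linarith [Real.log_two_gt_d9]
  have hmR : (N:ℝ)^(20*(R+1)) * 100 ≤ m := by
    have : (m:ℝ) = (N:ℝ)^k := by rw [hm, mm_eq]; push_cast; rfl
    rw [this]
    calc (N:ℝ)^(20*(R+1)) * 100 ≤ (N:ℝ)^(20*(R+1)) * N := by gcongr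
      _ = (N:ℝ)^(20*(R+1)+1) := by ring
      _ ≤ _ := pow_le_pow_right₀ (by linarith) (by omega)
  have hNR : (1:ℝ) ≤ (N:ℝ)^R := one_le_pow₀ (by linarith)
  have hlogX : (N:ℝ)^(20*(R+1)) ≤ Real.log ((q:ℝ)^m) := by
    rw [Real.log_pow]
    have : (0:ℝ) ≤ (N:ℝ)^(20*(R+1)) := by positivity
    nlinarith
  have hroot : (N:ℝ)^(R+1) ≤ (Real.log ((q:ℝ)^m))^((1:ℝ)/20) := by
    have h5 := Real.rpow_le_rpow (by positivity) hlogX (show (0:ℝ) ≤ 1/20 by norm_num)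
    rw [← Real.rpow_natCast, ← Real.rpow_mul (by positivity)] at h5
    have : (((20*(R+1) : ℕ):ℝ) * (1/20)) = ((R+1 : ℕ):ℝ) := by push_cast; ring
    rw [this, Real.rpow_natCast] at h5
    exact h5
  set e := Real.exp (-(N:ℝ)^R) with he
  have hepos : 0 < e := Real.exp_pos _
  have hexp3 : (8:ℝ) ≤ Real.exp 3 := by
    have hh5 : (2.7:ℝ) ≤ Real.exp 1 := by have := Real.exp_one_gt_d9; linarith
    calc (8:ℝ) ≤ 2.7^3 := by norm_num
      _ ≤ Real.exp 1 ^ 3 := by gcongr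
      _ = Real.exp 3 := by rw [← Real.exp_nat_mul]; norm_num
  have heps : 4 * Real.exp (-(Real.log ((q:ℝ)^m))^((1:ℝ)/20)/16) ≤ e/2 := by
    have : Real.exp (-(Real.log ((q:ℝ)^m))^((1:ℝ)/20)/16) ≤ Real.exp (-(N:ℝ)^R - 3) := by
      apply Real.exp_le_exp.mpr
      have : (N:ℝ)^(R+1) = (N:ℝ)^R * N := pow_succ _ _
      nlinarith
    rw [Real.exp_sub] at this
    have h6 : Real.exp (-(N:ℝ)^R) / Real.exp 3 ≤ e/8 := by
      rw [← he]; gcongr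
    linarith
  have hone : 1 ≤ (q:ℝ)^m * (e/2) := by
    have h7 : (q:ℝ)^m = Real.exp (m * Real.log q) := by
      rw [Real.exp_nat_mul, Real.exp_log hq0]
    have h8 : (N:ℝ)^R + 3 ≤ m * Real.log q := by
      have : (N:ℝ)^R ≤ (N:ℝ)^(20*(R+1)) := pow_le_pow_right₀ (by linarith) (by omega)
      nlinarith
    have h9 : Real.exp ((N:ℝ)^R + 3) ≤ (q:ℝ)^m := by rw [h7]; exact Real.exp_le_exp.mpr h8
    have h10 : Real.exp ((N:ℝ)^R + 3) * e = Real.exp 3 := by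
      rw [he, ← Real.exp_add]; ring_nf
    nlinarith
  calc (q':ℝ) + 1 < (q:ℝ)^m * (1 + 4 * Real.exp (-(Real.log ((q:ℝ)^m))^((1:ℝ)/20)/16)) + (q:ℝ)^m * (e/2) := by linarith
    _ ≤ (q:ℝ)^m * (1 + e/2) + (q:ℝ)^m * (e/2) := by gcongr
    _ = _ := by ring

lemma step2 (R : ℕ) (M : ℝ) (hM : 1 ≤ M) : ∃ K : ℕ, ∀ k ≥ K, ∀ q : ℕ, q.Prime → (q:ℝ) + 1 ≤ M ^ nn k → 
    ∃ q' : ℕ, q'.Prime ∧ q ^ mm k < q' ∧ q' + 1 < (q+1)^(mm k) ∧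
    (q':ℝ) + 1 < (q:ℝ)^(mm k) * (1 + Real.exp (-(nn k : ℝ)^R)) := by
  obtain ⟨K, hK⟩ := step (R+2)
  refine ⟨max K (⌈Real.log M⌉₊ + 1), fun k hk q hq hqM => ?_⟩
  have hk1 : K ≤ k := (le_max_left _ _).trans hk
  have hk2 : ⌈Real.log M⌉₊ + 1 ≤ k := (le_max_right _ _).trans hk
  obtain ⟨q', h1, h2, h3⟩ := hK k hk1 q hq.two_le
  have hNk : k ≤ nn k := nn_ge k
  have hN1 : (1:ℝ) ≤ nn k := by exact_mod_cast nn_pos k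
  have hq0 : (0:ℝ) < q := by exact_mod_cast hq.pos
  have hmono : Real.exp (-(nn k : ℝ)^(R+2)) ≤ Real.exp (-(nn k : ℝ)^R) := by
    apply Real.exp_le_exp.mpr
    have := pow_le_pow_right₀ hN1 (show R ≤ R+2 by omega)
    linarith
  refine ⟨q', h1, h2, ?_, h3.trans_le (by gcongr)⟩
  have hlogM : Real.log M ≤ nn k := by
    refine (Nat.le_ceil _).trans ?_
    exact_mod_cast (by omega : ⌈Real.log M⌉₊ ≤ nn k)
  have hqe : (q:ℝ) * Real.exp (-(nn k : ℝ)^(R+2)) ≤ 1 := by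
    have h4 : (q:ℝ) ≤ Real.exp ((nn k:ℝ)^2) := by
      calc (q:ℝ) ≤ M ^ nn k := by linarith
        _ = Real.exp (nn k * Real.log M) := by rw [Real.exp_nat_mul, Real.exp_log (by linarith)]
        _ ≤ _ := by apply Real.exp_le_exp.mpr; nlinarith
    have h5 : Real.exp ((nn k:ℝ)^2) ≤ Real.exp ((nn k:ℝ)^(R+2)) := 
      Real.exp_le_exp.mpr (pow_le_pow_right₀ hN1 (by omega))
    rw [Real.exp_neg, ← div_eq_mul_inv, div_le_one (Real.exp_pos _)]
    linarith
  have hbern := one_add_mul_le_pow (a := 1/(q:ℝ)) (le_trans (by norm_num) (by positivity : 0 ≤ 1/(q:ℝ))) (mm k)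
  have hm1 : (1:ℝ) ≤ mm k := by exact_mod_cast mm_pos k
  have : (q':ℝ) + 1 < ((q:ℝ)+1)^(mm k) := by
    refine h3.trans_le ?_
    have e1 : ((q:ℝ)+1)^(mm k) = (q:ℝ)^(mm k) * (1 + 1/q)^(mm k) := by
      rw [← mul_pow]; congr 1; field_simp
    rw [e1]
    have : Real.exp (-(nn k : ℝ)^(R+2)) ≤ mm k * (1/q) := by
      rw [mul_one_div, le_div_iff₀ hq0]; linarith
    gcongr
    linarith
  exact_mod_cast this

lemma floor_pow_dvd {a b : ℝ} (ha : 0 ≤ a) (hb : 0 ≤ b) {n n' : ℕ} (hn' : 0 < n') (hd : n ∣ n') 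
    (h : ⌊a ^ n'⌋ = ⌊b ^ n'⌋) : ⌊a ^ n⌋ = ⌊b ^ n⌋ := by
  obtain ⟨c, rfl⟩ := hd
  have hc : c ≠ 0 := by rintro rfl; simp at hn'
  have key : ∀ {x : ℝ}, 0 ≤ x → ∀ z : ℕ, ((z:ℤ) ≤ ⌊x^n⌋ ↔ ((z:ℤ)^c) ≤ ⌊x^(n*c)⌋) := by
    intro x hx z
    rw [Int.le_floor, Int.le_floor, pow_mul]
    push_cast
    exact (pow_le_pow_iff_left₀ (by positivity) (by positivity) hc).symm
  have hnn : ∀ {x : ℝ}, 0 ≤ x → 0 ≤ ⌊x^n⌋ := fun hx => Int.floor_nonneg.mpr (by positivity)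
  obtain ⟨u, hu⟩ := Int.eq_ofNat_of_zero_le (hnn ha)
  obtain ⟨v, hv⟩ := Int.eq_ofNat_of_zero_le (hnn hb)
  apply le_antisymm
  · rw [hu, key hb, ← h, ← key ha, hu]
  · rw [hv, key ha, h, ← key hb, hv]

end MillsInd

namespace MillsInd
open Filter Set

lemma exists_chain (R : ℕ) (M : ℝ) (hM : 1 ≤ M) : ∃ K : ℕ, ∀ k ≥ K, ∀ q : ℕ, q.Prime → (q:ℝ) + 1 ≤ M ^ nn k →
    ∃ B : ℝ, 1 < B ∧ ⌊B ^ nn k⌋ = (q:ℤ) ∧ (∀ j ≥ k, Prime ⌊B ^ nn j⌋) ∧ 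
      B ^ nn (k+1) < (q:ℝ)^(mm k) * (1 + Real.exp (-(nn k : ℝ)^R)) := by
  obtain ⟨K, hK⟩ := step2 R M hM
  refine ⟨K, fun k hk q hq hqM => ?_⟩
  choose f hf using hK
  classical
  let g : ℕ → ℕ → ℕ := fun i q => if h : k + i ≥ K ∧ q.Prime ∧ (q:ℝ) + 1 ≤ M ^ nn (k+i) then f (k+i) h.1 q h.2.1 h.2.2 else 0
  let Q : ℕ → ℕ := fun i => Nat.rec (motive := fun _ => ℕ) q (fun i x => g i x) i
  have hQ0 : Q 0 = q := rfl
  have hQs : ∀ i, Q (i+1) = g i (Q i) := fun i => rfl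
  have hinv : ∀ i, (Q i).Prime ∧ ((Q i : ℕ):ℝ) + 1 ≤ M ^ nn (k+i) := by
    intro i
    induction i with
    | zero => exact ⟨hq, hqM⟩
    | succ i ih =>
      have hc : k + i ≥ K ∧ (Q i).Prime ∧ ((Q i:ℕ):ℝ) + 1 ≤ M ^ nn (k+i) := ⟨by omega, ih.1, ih.2⟩
      have e : Q (i+1) = f (k+i) hc.1 (Q i) hc.2.1 hc.2.2 := by rw [hQs]; exact dif_pos hc
      have h := hf (k+i) hc.1 (Q i) hc.2.1 hc.2.2
      rw [← e] at h
      refine ⟨h.1, ?_⟩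
      have h3 : ((Q (i+1):ℕ):ℝ) + 1 ≤ (((Q i:ℕ):ℝ) + 1)^(mm (k+i)) := by exact_mod_cast h.2.2.1.le
      refine h3.trans ?_
      rw [← add_assoc, nn_succ, pow_mul]
      gcongr
      exact ih.2
  have hstep : ∀ i, (Q i)^(mm (k+i)) < Q (i+1) ∧ Q (i+1) + 1 < (Q i + 1)^(mm (k+i)) ∧
      ((Q (i+1):ℕ):ℝ) + 1 < ((Q i:ℕ):ℝ)^(mm (k+i)) * (1 + Real.exp (-(nn (k+i) : ℝ)^R)) := by
    intro i
    have hc : k + i ≥ K ∧ (Q i).Prime ∧ ((Q i:ℕ):ℝ) + 1 ≤ M ^ nn (k+i) := ⟨by omega, (hinv i).1, (hinv i).2⟩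
    have e : Q (i+1) = f (k+i) hc.1 (Q i) hc.2.1 hc.2.2 := by rw [hQs]; exact dif_pos hc
    have h := hf (k+i) hc.1 (Q i) hc.2.1 hc.2.2
    rw [← e] at h
    exact h.2
  let x : ℕ → ℝ := fun i => ((Q i:ℕ):ℝ) ^ ((nn (k+i) : ℝ)⁻¹)
  let z : ℕ → ℝ := fun i => (((Q i:ℕ):ℝ) + 1) ^ ((nn (k+i) : ℝ)⁻¹)
  have hx0 : ∀ i, 0 ≤ x i := fun i => by positivity
  have hz0 : ∀ i, 0 ≤ z i := fun i => by positivity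
  have hxp : ∀ i, x i ^ nn (k+i) = (Q i:ℕ) := fun i => Real.rpow_inv_natCast_pow (by positivity) (nn_pos _).ne'
  have hzp : ∀ i, z i ^ nn (k+i) = (Q i:ℕ) + 1 := fun i => Real.rpow_inv_natCast_pow (by positivity) (nn_pos _).ne'
  have hxz : ∀ i, x i ≤ z i := fun i => Real.rpow_le_rpow (by positivity) (by linarith) (by positivity)
  clear_value x z
  have hxm : Monotone x := by
    refine monotone_nat_of_le_succ fun i => ?_
    rw [← pow_le_pow_iff_left₀ (hx0 i) (hx0 _) (nn_pos (k+(i+1))).ne', hxp (i+1), ← add_assoc, nn_succ, pow_mul, hxp]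
    exact_mod_cast (hstep i).1.le
  have hzm : StrictAnti z := by
    refine strictAnti_nat_of_succ_lt fun i => ?_
    rw [← pow_lt_pow_iff_left₀ (hz0 _) (hz0 _) (nn_pos (k+(i+1))).ne', hzp (i+1), ← add_assoc, nn_succ, pow_mul, hzp]
    exact_mod_cast (hstep i).2.1
  have hxz' : ∀ i j, x i ≤ z j := fun i j => 
    (hxm (le_max_left i j)).trans ((hxz _).trans (hzm.antitone (le_max_right i j)))
  have hbdd : BddAbove (range x) := ⟨z 0, by rintro _ ⟨i, rfl⟩; exact hxz' i 0⟩
  set B := ⨆ i, x i with hB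
  have hlo : ∀ i, x i ≤ B := fun i => le_ciSup hbdd i
  have hhi : ∀ i, B < z i := fun i => (ciSup_le fun j => hxz' j (i+1)).trans_lt (hzm (Nat.lt_succ_self i))
  have hB0 : 0 ≤ B := (hx0 0).trans (hlo 0)
  have hBlo : ∀ i, ((Q i:ℕ):ℝ) ≤ B ^ nn (k+i) := fun i => by
    rw [← hxp i]; exact pow_le_pow_left₀ (hx0 i) (hlo i) _
  have hBhi : ∀ i, B ^ nn (k+i) < (Q i:ℕ) + 1 := fun i => by
    rw [← hzp i]; exact pow_lt_pow_left₀ (hhi i) hB0 (nn_pos _).ne'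
  have hfl : ∀ i, ⌊B ^ nn (k+i)⌋ = ((Q i : ℕ):ℤ) := fun i => by
    rw [Int.floor_eq_iff]; exact ⟨by exact_mod_cast hBlo i, by exact_mod_cast hBhi i⟩
  refine ⟨B, ?_, hfl 0, ?_, ?_⟩
  · by_contra h
    push Not at h
    have h1 : B ^ nn (k+0) ≤ 1 := pow_le_one₀ hB0 h
    have h2 := hBlo 0
    have h3 : (2:ℝ) ≤ (Q 0:ℕ) := by exact_mod_cast (hinv 0).1.two_le
    linarith
  · intro j hj
    obtain ⟨i, rfl⟩ := Nat.exists_eq_add_of_le hj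
    rw [hfl i]
    exact Nat.prime_iff_prime_int.mp (hinv i).1
  · exact (hBhi 1).trans (hstep 0).2.2

lemma compl_right_open {A : ℝ} (hA : A ∉ Wpow) : ∃ ε > 0, ∀ B, A ≤ B → B < A + ε → B ∉ Wpow := by
  by_cases h1 : A < 1
  · refine ⟨1 - A, by linarith, fun B _ hB hBW => ?_⟩
    have := hBW.1
    linarith
  · push Not at h1
    have hk : ∃ k : ℕ, 1 ≤ k ∧ ¬ Prime ⌊A ^ (3 ^ Nat.factorial k)⌋ := by
      rcases eq_or_lt_of_le h1 with h | h
      · refine ⟨1, le_rfl, ?_⟩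
        rw [← h]
        simp
      · by_contra hcon
        push Not at hcon
        exact hA ⟨h, hcon⟩
    obtain ⟨k, hk1, hk2⟩ := hk
    set n := 3 ^ Nat.factorial k with hn
    have hc : ContinuousAt (fun x : ℝ => x ^ n) A := by fun_prop
    have hev := hc.eventually (gt_mem_nhds (Int.lt_floor_add_one (A ^ n)))
    obtain ⟨ε, hε, hball⟩ := Metric.eventually_nhds_iff.mp hev
    refine ⟨ε, hε, fun B h2 h3 hBW => hk2 ?_⟩
    have h4 := hball (y := B) (by rw [Real.dist_eq, abs_of_nonneg (by linarith)]; linarith)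
    have h5 : ⌊B ^ n⌋ = ⌊A ^ n⌋ := by
      rw [Int.floor_eq_iff]
      refine ⟨(Int.floor_le _).trans (pow_le_pow_left₀ (by linarith) h2 _), h4⟩
    rw [← h5]
    exact hBW.2 k hk1

lemma subL_char {A : ℝ} (hA : A ∈ subL Wpow) : A ∈ Wpow ∧ ∃ x < A, ∀ B, x < B → B < A → B ∉ Wpow := by
  obtain ⟨U, ⟨x, hx, rfl⟩, hbdd, rfl⟩ := hA
  set U := connectedComponentIn Wpowᶜ x with hU
  have hxU : x ∈ U := mem_connectedComponentIn hx
  have hpre : IsPreconnected U := isPreconnected_connectedComponentIn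
  have hsub : U ⊆ Wpowᶜ := connectedComponentIn_subset _ _
  have hord : U.OrdConnected := hpre.ordConnected
  have hxA : x ≤ sSup U := le_csSup hbdd hxU
  have hmem : ∀ z, x ≤ z → z < sSup U → z ∈ U := by
    intro z h1 h2
    obtain ⟨u, hu, hzu⟩ := exists_lt_of_lt_csSup ⟨x, hxU⟩ h2
    exact hord.out hxU hu ⟨h1, hzu.le⟩
  have hAW : sSup U ∈ Wpow := by
    by_contra hcon
    obtain ⟨ε, hε, h⟩ := compl_right_open hcon
    have h1 : Ico x (sSup U + ε) ⊆ Wpowᶜ := by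
      intro z hz
      by_cases h2 : z < sSup U
      · exact hsub (hmem z hz.1 h2)
      · push Not at h2
        exact h z h2 hz.2
    have h2 : Ico x (sSup U + ε) ⊆ U := 
      isPreconnected_Ico.subset_connectedComponentIn (left_mem_Ico.mpr (by linarith)) h1
    have h3 := le_csSup hbdd (h2 (show sSup U + ε/2 ∈ Ico x (sSup U + ε) from ⟨by linarith, by linarith⟩))
    linarith
  refine ⟨hAW, x, lt_of_le_of_ne hxA ?_, fun B h1 h2 => hsub (hmem B h1.le h2)⟩
  intro h
  rw [← h] at hAW
  exact hx hAW

lemma pow_gap {x y : ℝ} (hx : 1 ≤ x) (hxy : x ≤ y) (n : ℕ) : x ^ n + n * (y - x) ≤ y ^ n := by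
  induction n with
  | zero => simp
  | succ n ih =>
    have h1 : 1 ≤ x ^ n := one_le_pow₀ hx
    have h2 : y ^ (n+1) = y^n * y := pow_succ _ _
    have h3 : x ^ (n+1) = x^n * x := pow_succ _ _
    push_cast
    have h4 : 0 ≤ y - x := by linarith
    have h5 : (0:ℝ) ≤ n * (y - x) := by positivity
    rw [h2, h3]
    nlinarith

theorem approx {A : ℝ} (hA : A ∈ subL Wpow) (R : ℕ) : 1 < A ∧ ∃ K : ℕ, ∀ k ≥ K, 
    ∃ p : ℕ, p.Prime ∧ (p:ℝ) ≤ A ^ nn k ∧ A ^ nn k < p + 1 ∧ 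
    A - (p:ℝ) ^ ((nn k : ℝ)⁻¹) ≤ A * Real.exp (-(nn k : ℝ)^R) := by
  obtain ⟨hAW, x, hxA, hx⟩ := subL_char hA
  have hA1 : 1 < A := hAW.1
  refine ⟨hA1, ?_⟩
  obtain ⟨K, hK⟩ := exists_chain R (2 * A) (by linarith)
  have hx1A : max x 1 < A := max_lt hxA hA1
  refine ⟨max (max K 1) (⌈1/(A - max x 1)⌉₊), fun k hk => ?_⟩
  have hk1 : K ≤ k := (le_max_left _ _).trans ((le_max_left _ _).trans hk)
  have hk2 : 1 ≤ k := (le_max_right _ _).trans ((le_max_left _ _).trans hk)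
  have hk3 := (le_max_right _ _).trans hk
  have hpz : Prime ⌊A ^ nn k⌋ := hAW.2 k hk2
  have hfl0 : 0 ≤ ⌊A ^ nn k⌋ := Int.floor_nonneg.mpr (by positivity)
  obtain ⟨p, hp⟩ := Int.eq_ofNat_of_zero_le hfl0
  rw [hp] at hpz
  have hpp : p.Prime := Nat.prime_iff_prime_int.mpr hpz
  have hfl := Int.floor_eq_iff.mp hp
  have hpl : (p:ℝ) ≤ A ^ nn k := by exact_mod_cast hfl.1
  have hpu : A ^ nn k < p + 1 := by exact_mod_cast hfl.2
  refine ⟨p, hpp, hpl, hpu, ?_⟩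
  have hpM : (p:ℝ) + 1 ≤ (2 * A) ^ nn k := by
    have h1 : 1 ≤ A ^ nn k := one_le_pow₀ hA1.le
    have h2 : (2:ℝ) ≤ 2 ^ nn k := le_self_pow₀ (by norm_num) (nn_pos k).ne'
    rw [mul_pow]; nlinarith
  obtain ⟨B, hB1, hBf, hBp, hBu⟩ := hK k hk1 p hpp hpM
  have hBW : B ∈ Wpow := by
    refine ⟨hB1, fun j hj => ?_⟩
    change Prime ⌊B ^ nn j⌋
    by_cases hjk : k ≤ j
    · exact hBp j hjk
    · have : ⌊B ^ nn j⌋ = ⌊A ^ nn j⌋ := 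
        floor_pow_dvd (by linarith) (by linarith) (nn_pos k) (nn_dvd (by omega)) (by rw [hBf, hp])
      rw [this]
      exact hAW.2 j hj
  have hBx : x < B := by
    refine (le_max_left x 1).trans_lt ?_
    have h1 := pow_gap (le_max_right x 1) hx1A.le (nn k)
    have h2 : 1 ≤ nn k * (A - max x 1) := by
      have h3 : 1/(A - max x 1) ≤ nn k := (Nat.le_ceil _).trans (by exact_mod_cast hk3.trans (nn_ge k))
      rwa [div_le_iff₀ (by linarith)] at h3
    have h4 : (p:ℝ) ≤ B ^ nn k := by
      have := (Int.floor_eq_iff.mp hBf).1; exact_mod_cast this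
    have h5 : (max x 1) ^ nn k < B ^ nn k := by linarith
    exact lt_of_pow_lt_pow_left₀ _ (by linarith) h5
  have hAB : A ≤ B := by
    by_contra h
    push Not at h
    exact hx B hBx h hBW
  set α := (p:ℝ) ^ ((nn k : ℝ)⁻¹) with hα
  have hα0 : 0 ≤ α := by positivity
  have hαp : α ^ nn k = p := Real.rpow_inv_natCast_pow (by positivity) (nn_pos _).ne'
  set e := Real.exp (-(nn k : ℝ)^R) with he
  have he0 : 0 < e := Real.exp_pos _
  have hαA : α ≤ A := by
    rw [← pow_le_pow_iff_left₀ hα0 (by linarith) (nn_pos k).ne', hαp]; exact hpl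
  have hle : A ≤ α * (1 + e) := by
    rw [← pow_le_pow_iff_left₀ (by linarith) (by positivity) (nn_pos (k+1)).ne']
    calc A ^ nn (k+1) ≤ B ^ nn (k+1) := by gcongr
      _ ≤ (p:ℝ)^(mm k) * (1 + e) := hBu.le
      _ ≤ (p:ℝ)^(mm k) * (1 + e)^(nn (k+1)) := by
          gcongr
          exact le_self_pow₀ (by linarith) (nn_pos _).ne'
      _ = _ := by rw [mul_pow]; congr 1; rw [nn_succ, pow_mul, hαp]
  nlinarith

end MillsInd

namespace MillsInd
open Polynomial

lemma trace_zero (K : IntermediateField ℚ ℝ) [FiniteDimensional ℚ K] (γ : K) (n : ℕ) (hn : 0 < n) (c : ℚ)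
    (hγ : 0 < (γ:ℝ)) (hpow : (γ:ℝ)^n = c) (hirr : ∀ q : ℚ, (γ:ℝ) ≠ q) : Algebra.trace ℚ K γ = 0 := by
  have hIntg : IsIntegral ℚ γ := Algebra.IsIntegral.isIntegral γ
  set f := minpoly ℚ γ with hf
  have hmon : f.Monic := minpoly.monic hIntg
  set e := f.natDegree with he
  have hepos : 0 < e := minpoly.natDegree_pos hIntg
  -- absolute value of constant coefficient
  have hcoeff : |((f.coeff 0 : ℚ):ℝ)| = (γ:ℝ)^e := by
    set F := f.map (algebraMap ℚ ℂ) with hF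
    have hFs : F.Splits := IsAlgClosed.splits F
    have hFm : F.Monic := hmon.map _
    have h1 := hFs.coeff_zero_eq_prod_roots_of_monic hFm
    have hdvd : f ∣ X^n - C c := by
      apply minpoly.dvd
      simp only [map_sub, map_pow, aeval_X, aeval_C]
      have : γ^n = algebraMap ℚ K c := by
        apply Subtype.ext
        push_cast
        rw [hpow]; rfl
      rw [this, sub_self]
    have hroots : ∀ z ∈ F.roots, ‖z‖ = (γ:ℝ) := by
      intro z hz
      have hz0 : F.eval z = 0 := (mem_roots'.mp hz).2
      have hd2 : F ∣ X^n - C (c:ℂ) := by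
        have := Polynomial.map_dvd (algebraMap ℚ ℂ) hdvd
        simpa using this
      have h2 : (X^n - C (c:ℂ)).eval z = 0 := eval_eq_zero_of_dvd_of_eval_eq_zero hd2 hz0
      simp only [eval_sub, eval_pow, eval_X, eval_C, sub_eq_zero] at h2
      have h3 : ‖z‖^n = (γ:ℝ)^n := by
        rw [← norm_pow, h2, hpow]
        have hc0 : (0:ℝ) ≤ c := by rw [← hpow]; positivity
        have : ((c:ℂ)) = (((c:ℝ)):ℂ) := by push_cast; rfl
        rw [this, Complex.norm_real, Real.norm_of_nonneg hc0]
      exact (pow_left_inj₀ (norm_nonneg _) hγ.le hn.ne').mp h3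
    have hcard : F.roots.card = e := by
      rw [← hFs.natDegree_eq_card_roots, hF, natDegree_map]
    have hprod : ‖F.roots.prod‖ = (γ:ℝ)^e := by
      have h5 : ‖F.roots.prod‖ = (F.roots.map (fun z => ‖z‖)).prod := 
        map_multiset_prod (normHom (α := ℂ)) F.roots
      rw [h5, Multiset.map_congr rfl hroots, Multiset.map_const', Multiset.prod_replicate, hcard]
    have h6 := congrArg norm h1
    rw [norm_mul, norm_pow, norm_neg, norm_one, one_pow, one_mul, hprod, hF, coeff_map] at h6
    rw [← h6]
    have : (algebraMap ℚ ℂ) (f.coeff 0) = (((f.coeff 0 : ℚ):ℝ):ℂ) := by simp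
    rw [this, Complex.norm_real, Real.norm_eq_abs]
  set d : ℚ := |f.coeff 0| with hd
  have hγe : (γ:ℝ)^e = (d:ℝ) := by rw [← hcoeff, hd]; push_cast; rfl
  have hfe : X^e - C d = f := by
    have hdeg : (X^e - C d : ℚ[X]).degree = e := degree_X_pow_sub_C hepos d
    apply minpoly.unique ℚ γ (monic_X_pow_sub_C d hepos.ne')
    · simp only [map_sub, map_pow, aeval_X, aeval_C]
      have : γ^e = algebraMap ℚ K d := by
        apply Subtype.ext
        push_cast
        rw [hγe]; rfl
      rw [this, sub_self]
    · intro q hq h0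
      rw [hdeg, he, ← degree_eq_natDegree hmon.ne_zero]
      exact minpoly.min ℚ γ hq h0
  have he2 : 2 ≤ e := by
    by_contra h
    have h1 : e = 1 := by omega
    rw [h1, pow_one] at hγe
    exact hirr d hγe
  have hnext : f.nextCoeff = 0 := by
    rw [nextCoeff_of_natDegree_pos (by omega), ← he, ← hfe]
    rw [coeff_sub, coeff_X_pow, coeff_C]
    rw [if_neg (by omega), if_neg (by omega)]; simp
  rw [trace_eq_finrank_mul_minpoly_nextCoeff, ← hf, hnext]; simp

lemma padic_prod {r : ℕ} (p : Fin r → ℕ) (hp : ∀ i, (p i).Prime) (hinj : Function.Injective p) (d : Fin r → ℕ) (j : Fin r) :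
    padicValRat (p j) (∏ i, ((p i : ℕ):ℚ)^(d i)) = d j := by
  haveI : Fact (p j).Prime := ⟨hp j⟩
  have key : ∀ s : Finset (Fin r), padicValRat (p j) (∏ i ∈ s, ((p i : ℕ):ℚ)^(d i)) = if j ∈ s then (d j : ℤ) else 0 := by
    intro s
    induction s using Finset.induction_on with
    | empty => simp
    | insert a s ha ih =>
      have h1 : ((p a : ℕ):ℚ)^(d a) ≠ 0 := pow_ne_zero _ (by exact_mod_cast (hp a).ne_zero)
      have h2 : ∏ i ∈ s, ((p i : ℕ):ℚ)^(d i) ≠ 0 := 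
        Finset.prod_ne_zero_iff.mpr fun i _ => pow_ne_zero _ (by exact_mod_cast (hp i).ne_zero)
      rw [Finset.prod_insert ha, padicValRat.mul h1 h2, ih, padicValRat.pow]
      by_cases haj : a = j
      · subst haj
        rw [padicValRat.self (hp a).one_lt]
        simp [ha]
      · have h3 : padicValRat (p j) ((p a : ℕ):ℚ) = 0 := by
          rw [padicValRat.of_nat]
          have : padicValNat (p j) (p a) = 0 := by
            apply padicValNat.eq_zero_of_not_dvd
            intro hdvd
            rw [Nat.prime_dvd_prime_iff_eq (hp j) (hp a)] at hdvd
            exact haj (hinj hdvd.symm)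
          rw [this]; rfl
        rw [h3]
        simp [Ne.symm haj]
  simpa using key Finset.univ

section Indep
variable {r n : ℕ} (p : Fin r → ℕ) (α : Fin r → ℝ)

lemma monomial_irr (hp : ∀ i, (p i).Prime) (hinj : Function.Injective p)
  (hα : ∀ i, 0 < α i) (hαp : ∀ i, α i ^ n = p i) (a b : Fin r → ℕ) (ha : ∀ i, a i < n) (hb : ∀ i, b i < n) (hab : a ≠ b) (q : ℚ) :
    (∏ i, α i ^ a i) / (∏ i, α i ^ b i) ≠ q := by
  intro h
  have hb0 : (∏ i, α i ^ b i) ≠ 0 := Finset.prod_ne_zero_iff.mpr fun i _ => pow_ne_zero _ (hα i).ne'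
  have ha0 : (∏ i, α i ^ a i) ≠ 0 := Finset.prod_ne_zero_iff.mpr fun i _ => pow_ne_zero _ (hα i).ne'
  rw [div_eq_iff hb0] at h
  have hpw : ∀ d : Fin r → ℕ, (∏ i, α i ^ d i)^n = ((∏ i, ((p i:ℕ):ℚ)^(d i) : ℚ):ℝ) := by
    intro d
    push_cast
    rw [← Finset.prod_pow]
    apply Finset.prod_congr rfl
    intro i _
    rw [← hαp i, ← pow_mul, ← pow_mul, mul_comm]
  have h2 := congrArg (fun x => x^n) h
  simp only [mul_pow] at h2
  rw [hpw, hpw] at h2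
  have h3 : (∏ i, ((p i:ℕ):ℚ)^(a i) : ℚ) = q^n * ∏ i, ((p i:ℕ):ℚ)^(b i) := by exact_mod_cast h2
  have hq0 : q ≠ 0 := by
    rintro rfl
    simp at h; exact ha0 h
  apply hab
  funext j
  haveI : Fact (p j).Prime := ⟨hp j⟩
  have h4 := congrArg (padicValRat (p j)) h3
  have h5 : ∏ i, ((p i : ℕ):ℚ)^(b i) ≠ 0 := 
        Finset.prod_ne_zero_iff.mpr fun i _ => pow_ne_zero _ (by exact_mod_cast (hp i).ne_zero)
  rw [padicValRat.mul (pow_ne_zero _ hq0) h5, padicValRat.pow, padic_prod p hp hinj, padic_prod p hp hinj] at h4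
  have h6 := ha j
  have h7 := hb j
  have h8 : padicValRat (p j) q = 0 := by
    by_contra hv
    rcases lt_or_gt_of_ne hv with hv | hv <;> nlinarith
  rw [h8] at h4
  simpa using h4

/-- main lower bound -/
lemma lower (P : MvPolynomial (Fin r) ℤ) (hP : P ≠ 0) (hdeg : ∀ m ∈ P.support, ∀ i, m i < n)
    (hp : ∀ i, (p i).Prime) (hinj : Function.Injective p) (hα : ∀ i, 0 < α i) (hαp : ∀ i, α i ^ n = p i) (hn : 0 < n)
    (C0 : ℝ) (hC1 : 1 ≤ C0) (hC0 : ∑ m ∈ P.support, |((P.coeff m : ℤ):ℝ)| * ∏ i, α i ^ m i ≤ C0) :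
    1 ≤ |MvPolynomial.aeval α P| * C0 ^ (n^r) := by
  classical
  set K := IntermediateField.adjoin ℚ (Set.range α) with hK
  have hαint : ∀ i, IsIntegral ℤ (α i) := by
    intro i
    refine IsIntegral.of_pow hn ?_
    rw [hαp i]
    exact isIntegral_algebraMap (R := ℤ) (x := (p i : ℤ)) |> fun h => by simpa using h
  haveI : FiniteDimensional ℚ K := by
    apply IntermediateField.finiteDimensional_adjoin
    rintro _ ⟨i, rfl⟩
    exact (hαint i).tower_top
  let a : Fin r → K := fun i => ⟨α i, IntermediateField.subset_adjoin ℚ _ ⟨i, rfl⟩⟩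
  have haα : ∀ i, ((a i : K):ℝ) = α i := fun i => rfl
  have ha0 : ∀ i, a i ≠ 0 := fun i h => (hα i).ne' (by rw [← haα i, h]; rfl)
  have hap : ∀ i, a i ^ n = (p i : K) := fun i => by
    apply Subtype.ext
    push_cast
    rw [haα, hαp]
  set β : K := MvPolynomial.aeval a P with hβ
  have hsum : ∀ {L : Type} [Field L] [Algebra ℤ L] (v : Fin r → L), MvPolynomial.aeval v P = ∑ m ∈ P.support, ((P.coeff m : ℤ):L) * ∏ i, v i ^ m i := by
    intro L _ _ v
    rw [MvPolynomial.aeval_def, MvPolynomial.eval₂_eq']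
    simp
  have hβα : ((β:K):ℝ) = MvPolynomial.aeval α P := by
    rw [hβ, hsum, hsum]
    push_cast
    rfl
  -- nonvanishing
  have hβ0 : β ≠ 0 := by
    intro h0
    obtain ⟨b, hb⟩ := MvPolynomial.support_nonempty.mpr hP
    have hb0 : (∏ i, a i ^ b i) ≠ 0 := Finset.prod_ne_zero_iff.mpr fun i _ => pow_ne_zero _ (ha0 i)
    have h1 : ∑ m ∈ P.support, ((P.coeff m : ℤ):ℚ) • ((∏ i, a i ^ m i) / ∏ i, a i ^ b i) = 0 := by
      have h2 : (∑ m ∈ P.support, ((P.coeff m : ℤ):K) * ∏ i, a i ^ m i) / (∏ i, a i ^ b i) = 0 := by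
        rw [← hsum, ← hβ, h0, zero_div]
      rw [Finset.sum_div] at h2
      rw [← h2]
      apply Finset.sum_congr rfl
      intro m _
      rw [Algebra.smul_def, mul_div_assoc]
      simp
    have h3 := congrArg (Algebra.trace ℚ K) h1
    rw [map_sum, map_zero] at h3
    rw [Finset.sum_eq_single_of_mem b hb] at h3
    · have ht : Algebra.trace ℚ K 1 = (Module.finrank ℚ K : ℚ) := by
        have := Algebra.trace_algebraMap (R := ℚ) (S := K) 1
        rw [map_one] at this
        rw [this]; simp
      rw [map_smul, div_self hb0, ht] at h3
      rw [smul_eq_mul, mul_eq_zero] at h3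
      rcases h3 with h3 | h3
      · exact (MvPolynomial.mem_support_iff.mp hb) (by exact_mod_cast h3)
      · have : 0 < Module.finrank ℚ K := Module.finrank_pos
        exact this.ne' (by exact_mod_cast h3)
    · intro m hm hmb
      rw [map_smul]
      have hγ : ((((∏ i, a i ^ m i) / ∏ i, a i ^ b i : K)):ℝ) = (∏ i, α i ^ m i) / ∏ i, α i ^ b i := by
        push_cast
        rfl
      rw [trace_zero K _ n hn ((∏ i, ((p i:ℕ):ℚ)^(m i)) / (∏ i, ((p i:ℕ):ℚ)^(b i))) ?_ ?_ ?_, smul_zero]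
      · rw [hγ]
        exact div_pos (Finset.prod_pos fun i _ => pow_pos (hα i) _) (Finset.prod_pos fun i _ => pow_pos (hα i) _)
      · rw [hγ, div_pow]
        push_cast
        simp only [← Finset.prod_pow]
        congr 1 <;>
        · apply Finset.prod_congr rfl
          intro i _
          rw [← hαp i, ← pow_mul, ← pow_mul, mul_comm]
      · intro q
        rw [hγ]
        exact monomial_irr p α hp hinj hα hαp m b (hdeg m hm) (hdeg b hb) (fun h => hmb (DFunLike.coe_injective h)) q
  -- integrality
  have hβint : IsIntegral ℤ β := by
    have haint : ∀ i, IsIntegral ℤ (a i) := by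
      intro i
      refine IsIntegral.of_pow hn ?_
      rw [hap i]
      exact isIntegral_algebraMap (R := ℤ) (x := (p i : ℤ)) |> fun h => by simpa using h
    rw [hβ, hsum]
    refine IsIntegral.sum _ fun m _ => IsIntegral.mul ?_ (IsIntegral.prod _ fun i _ => (haint i).pow _)
    rw [← eq_intCast (algebraMap ℤ K)]
    exact isIntegral_algebraMap
  obtain ⟨z, hz⟩ := IsIntegrallyClosed.isIntegral_iff.mp (Algebra.isIntegral_norm ℚ hβint)
  have hz0 : z ≠ 0 := by
    rintro rfl
    rw [map_zero] at hz
    exact hβ0 (Algebra.norm_eq_zero_iff.mp hz.symm)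
  have hnorm := Algebra.norm_eq_prod_embeddings ℚ ℂ β
  rw [← hz] at hnorm
  have h1 : (1:ℝ) ≤ ∏ σ : K →ₐ[ℚ] ℂ, ‖σ β‖ := by
    rw [← norm_prod, ← hnorm]
    have : (algebraMap ℚ ℂ) ((algebraMap ℤ ℚ) z) = (z:ℂ) := by simp
    rw [this, Complex.norm_intCast]
    exact_mod_cast Int.one_le_abs hz0
  have hσa : ∀ (σ : K →ₐ[ℚ] ℂ) i, σ (a i) ^ n = (p i : ℂ) := by
    intro σ i
    rw [← map_pow, hap i, map_natCast]
  have hσn : ∀ (σ : K →ₐ[ℚ] ℂ) i, ‖σ (a i)‖ = α i := by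
    intro σ i
    have h2 : ‖σ (a i)‖^n = α i ^ n := by rw [← norm_pow, hσa, hαp]; simp
    exact (pow_left_inj₀ (norm_nonneg _) (hα i).le hn.ne').mp h2
  have hσβ : ∀ σ : K →ₐ[ℚ] ℂ, ‖σ β‖ ≤ C0 := by
    intro σ
    refine le_trans ?_ hC0
    rw [hβ, hsum, map_sum]
    refine (norm_sum_le _ _).trans (Finset.sum_le_sum fun m _ => ?_)
    rw [map_mul, map_intCast, map_prod, norm_mul, Complex.norm_intCast, norm_prod]
    simp only [map_pow, norm_pow, hσn]
    exact le_rfl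
  let σ0 : K →ₐ[ℚ] ℂ := (Complex.ofRealAm.restrictScalars ℚ).comp K.val
  have hσ0 : ‖σ0 β‖ = |MvPolynomial.aeval α P| := by
    have : σ0 β = (((β:K):ℝ):ℂ) := rfl
    rw [this, Complex.norm_real, hβα, Real.norm_eq_abs]
  have hcard : Fintype.card (K →ₐ[ℚ] ℂ) ≤ n^r := by
    let T : Finset (Fin r → ℂ) := Fintype.piFinset fun i => (nthRoots n ((p i:ℕ):ℂ)).toFinset
    have hT : T.card ≤ n^r := by
      rw [Fintype.card_piFinset]
      calc _ ≤ ∏ i : Fin r, n := Finset.prod_le_prod' fun i _ => (Multiset.toFinset_card_le _).trans (card_nthRoots _ _)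
        _ = n^r := by simp
    refine le_trans ?_ hT
    rw [← Finset.card_univ]
    apply Finset.card_le_card_of_injOn (fun σ i => σ (a i))
    · intro σ _
      simp only [T, Finset.mem_coe, Fintype.mem_piFinset, Multiset.mem_toFinset]
      intro i
      rw [mem_nthRoots hn]
      exact hσa σ i
    · intro σ _ τ _ h
      apply IntermediateField.algHom_ext_of_eq_adjoin ℚ hK
      rintro _ ⟨i, rfl⟩
      exact congrFun h i
  rw [← Finset.mul_prod_erase Finset.univ _ (Finset.mem_univ σ0), hσ0] at h1
  refine h1.trans ?_
  gcongr
  calc _ ≤ ∏ σ ∈ Finset.univ.erase σ0, C0 := Finset.prod_le_prod (fun _ _ => norm_nonneg _) fun σ _ => hσβ σ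
    _ = C0 ^ (Finset.univ.erase σ0).card := by simp
    _ ≤ C0 ^ (n^r) := by
      apply pow_le_pow_right₀ hC1
      refine le_trans (Finset.card_le_card (Finset.erase_subset _ _)) ?_
      rw [Finset.card_univ]; exact hcard
end Indep

end MillsInd

namespace MillsInd

lemma prod_diff {r : ℕ} (A α : Fin r → ℝ) (m : Fin r →₀ ℕ) (e : ℝ) (he0 : 0 ≤ e) (he1 : e ≤ 1)
    (hA : ∀ i, 0 < A i) (hα : ∀ i, 0 < α i) (hle : ∀ i, α i ≤ A i) (h : ∀ i, A i - α i ≤ A i * e) :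
    |(∏ i, α i ^ m i) - ∏ i, A i ^ m i| ≤ (∏ i, A i ^ m i) * ((∑ i, m i : ℕ) * e) := by
  have h1 : ∏ i, α i ^ m i ≤ ∏ i, A i ^ m i :=
    Finset.prod_le_prod (fun i _ => (pow_pos (hα i) _).le) fun i _ => pow_le_pow_left₀ (hα i).le (hle i) _
  have h2 : (∏ i, A i ^ m i) * (1 - e) ^ (∑ i, m i) ≤ ∏ i, α i ^ m i := by
    rw [← Finset.prod_pow_eq_pow_sum, ← Finset.prod_mul_distrib]
    apply Finset.prod_le_prod
    · intro i _
      have := hA i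
      have : 0 ≤ 1 - e := by linarith
      positivity
    · intro i _
      rw [← mul_pow]
      have : 0 ≤ 1 - e := by linarith
      have := hA i
      apply pow_le_pow_left₀ (by positivity)
      have := h i
      linarith
  have h3 : 1 - (∑ i, m i : ℕ) * e ≤ (1 - e) ^ (∑ i, m i) := by
    have := one_add_mul_le_pow (a := -e) (by linarith) (∑ i, m i)
    have h4 : (1:ℝ) + -e = 1 - e := by ring
    rw [h4] at this
    linarith
  have h4 : 0 ≤ ∏ i, A i ^ m i := Finset.prod_nonneg fun i _ => (pow_pos (hA i) _).le
  have h5 := mul_le_mul_of_nonneg_left h3 h4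
  rw [abs_sub_comm, abs_of_nonneg (by linarith)]
  linarith

lemma aeval_sum {r : ℕ} (P : MvPolynomial (Fin r) ℤ) (v : Fin r → ℝ) :
    MvPolynomial.aeval v P = ∑ m ∈ P.support, ((P.coeff m : ℤ):ℝ) * ∏ i, v i ^ m i := by
  rw [MvPolynomial.aeval_def, MvPolynomial.eval₂_eq']
  simp

theorem main_int (r : ℕ) (A : Fin r → ℝ) (hinj : Function.Injective A)
    (hA : ∀ i : Fin r, A i ∈ subL Wpow) : AlgebraicIndependent ℤ A := by
  rw [algebraicIndependent_iff]
  intro P hP0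
  by_contra hP
  have hA1 : ∀ i, 1 < A i := fun i => (approx (hA i) 0).1
  choose K hK using fun i => (approx (hA i) (r+1)).2
  set C1 : ℝ := ∑ m ∈ P.support, |((P.coeff m : ℤ):ℝ)| * ∏ i, A i ^ m i with hC1
  have hterm : ∀ m : Fin r →₀ ℕ, 0 ≤ ∏ i, A i ^ m i := fun m =>
    Finset.prod_nonneg fun i _ => pow_nonneg (by linarith [hA1 i]) _
  have hC1n : 0 ≤ C1 := Finset.sum_nonneg fun m _ => mul_nonneg (abs_nonneg _) (hterm m)
  set D := P.totalDegree with hD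
  have hmD : ∀ m ∈ P.support, ∑ i, m i ≤ D := by
    intro m hm
    have := MvPolynomial.le_totalDegree hm
    rwa [Finsupp.sum_fintype _ _ (fun _ => rfl)] at this
  set B : ℝ := (1 + C1) * (D + 1) with hB
  have hB1 : 1 + C1 ≤ B := by
    rw [hB]; nlinarith [Nat.cast_nonneg (α := ℝ) D]
  have hB2 : C1 * D ≤ B := by
    rw [hB]; nlinarith [Nat.cast_nonneg (α := ℝ) D]
  -- choice of k
  obtain ⟨N1, hN1⟩ := exists_nat_gt (2 * B)
  have hsep : ∀ i j, ∃ N : ℕ, A i < A j → 1 ≤ (N:ℝ) * (A j - A i) := by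
    intro i j
    by_cases h : A i < A j
    · obtain ⟨N, hN⟩ := exists_nat_gt (1 / (A j - A i))
      refine ⟨N, fun _ => ?_⟩
      rw [div_lt_iff₀ (by linarith)] at hN
      exact hN.le
    · exact ⟨0, fun h' => absurd h' h⟩
  choose N hN using hsep
  let k : ℕ := N1 + (D + 1) + ∑ i, K i + ∑ i, ∑ j, N i j
  have hkK : ∀ i, K i ≤ k := fun i => by
    have := Finset.single_le_sum (f := K) (fun _ _ => Nat.zero_le _) (Finset.mem_univ i)
    simp only [k]; omega
  have hkN : ∀ i j, N i j ≤ k := fun i j => by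
    have h1 := Finset.single_le_sum (f := N i) (fun _ _ => Nat.zero_le _) (Finset.mem_univ j)
    have h2 := Finset.single_le_sum (f := fun i => ∑ j, N i j) (fun _ _ => Nat.zero_le _) (Finset.mem_univ i)
    simp only [k]; omega
  have hkn := nn_ge k
  choose p hpp hp1 hp2 hp3 using fun i => hK i k (hkK i)
  set n := nn k with hn
  have hn0 : 0 < n := nn_pos k
  have hDn : D < n := by
    have : D < k := by simp only [k]; omega
    omega
  have hBn : 2 * B < n := by
    refine hN1.trans_le ?_
    have : N1 ≤ n := by
      have : N1 ≤ k := by simp only [k]; omega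
      omega
    exact_mod_cast this
  let α : Fin r → ℝ := fun i => (p i : ℝ) ^ ((n:ℝ)⁻¹)
  have hppos : ∀ i, (0:ℝ) < p i := fun i => by exact_mod_cast (hpp i).pos
  have hα : ∀ i, 0 < α i := fun i => Real.rpow_pos_of_pos (hppos i) _
  have hαp : ∀ i, α i ^ n = p i := fun i => Real.rpow_inv_natCast_pow (hppos i).le hn0.ne'
  have hA0 : ∀ i, 0 < A i := fun i => by linarith [hA1 i]
  have hαA : ∀ i, α i ≤ A i := fun i => by
    refine le_of_pow_le_pow_left₀ hn0.ne' (hA0 i).le ?_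
    rw [hαp]; exact hp1 i
  have hlt : ∀ i j, A i < A j → p i < p j := by
    intro i j hij
    have h1 := pow_gap (hA1 i).le hij.le n
    have h2 := hN i j hij
    have h3 : (N i j : ℝ) ≤ n := by exact_mod_cast (hkN i j).trans hkn
    have h4 : (N i j:ℝ) * (A j - A i) ≤ n * (A j - A i) :=
      mul_le_mul_of_nonneg_right h3 (by linarith)
    have : (p i : ℝ) < p j := by linarith [hp1 i, hp2 j]
    exact_mod_cast this
  have hpinj : Function.Injective p := by
    intro i j hij
    apply hinj
    rcases lt_trichotomy (A i) (A j) with h | h | h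
    · have := hlt i j h; omega
    · exact h
    · have := hlt j i h; omega
  set e : ℝ := Real.exp (-(n:ℝ)^(r+1)) with he
  have he0 : 0 ≤ e := (Real.exp_pos _).le
  have he1 : e ≤ 1 := by
    rw [he, Real.exp_le_one_iff]
    have : (0:ℝ) ≤ (n:ℝ)^(r+1) := by positivity
    linarith
  have hlow := lower p α P hP (fun m hm i => by
      have := Finset.single_le_sum (f := fun i => m i) (fun _ _ => Nat.zero_le _) (Finset.mem_univ i)
      have := hmD m hm
      omega) hpp hpinj hα hαp hn0 (1 + C1) (by linarith) (by
      refine le_trans ?_ (by linarith : C1 ≤ 1 + C1)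
      refine Finset.sum_le_sum fun m _ => mul_le_mul_of_nonneg_left ?_ (abs_nonneg _)
      exact Finset.prod_le_prod (fun i _ => (pow_pos (hα i) _).le)
        fun i _ => pow_le_pow_left₀ (hα i).le (hαA i) _)
  have hup : |MvPolynomial.aeval α P| ≤ C1 * D * e := by
    have h1 : MvPolynomial.aeval α P = MvPolynomial.aeval α P - MvPolynomial.aeval A P := by
      rw [hP0, sub_zero]
    rw [h1, aeval_sum, aeval_sum, ← Finset.sum_sub_distrib]
    refine (Finset.abs_sum_le_sum_abs _ _).trans ?_
    rw [hC1, Finset.sum_mul, Finset.sum_mul]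
    refine Finset.sum_le_sum fun m hm => ?_
    rw [← mul_sub, abs_mul, mul_assoc, mul_assoc]
    refine mul_le_mul_of_nonneg_left ?_ (abs_nonneg _)
    refine (prod_diff A α m e he0 he1 hA0 hα hαA hp3).trans ?_
    refine mul_le_mul_of_nonneg_left ?_ (hterm m)
    refine mul_le_mul_of_nonneg_right ?_ he0
    exact_mod_cast hmD m hm
  have hB0 : 0 ≤ B := by linarith
  have h1 : 1 ≤ B * e * B ^ (n^r) := by
    refine hlow.trans ?_
    refine mul_le_mul (hup.trans (mul_le_mul_of_nonneg_right hB2 he0)) ?_ (by positivity) (by positivity)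
    exact pow_le_pow_left₀ (by linarith) hB1 _
  have h2 : B ≤ Real.exp B := by linarith [Real.add_one_le_exp B]
  have h3 : B * e * B ^ (n^r) ≤ Real.exp (B + -(n:ℝ)^(r+1) + (n^r : ℕ) * B) := by
    rw [Real.exp_add, Real.exp_add, Real.exp_nat_mul]
    have := pow_le_pow_left₀ hB0 h2 (n^r)
    gcongr
  have h4 := h1.trans h3
  rw [Real.one_le_exp_iff] at h4
  push_cast at h4
  have h5 : (1:ℝ) ≤ (n:ℝ)^r := one_le_pow₀ (by exact_mod_cast hn0)
  rw [pow_succ] at h4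
  nlinarith

end MillsInd

/-- Every (nonempty finite) family of distinct elements of the left sub-boundary of
`Wpow` is algebraically independent over `ℚ`. -/
theorem algebraicIndependent_subL_Wpow
    (r : ℕ) (hr : 0 < r) (A : Fin r → ℝ) (hinj : Function.Injective A)
    (hA : ∀ i : Fin r, A i ∈ subL Wpow) :
    AlgebraicIndependent ℚ A := by
  have h := MillsInd.main_int r A hinj hA
  have : Algebra.IsAlgebraic ℤ ℚ := IsLocalization.isAlgebraic ℚ (nonZeroDivisors ℤ)
  exact h.extendScalars ℚ
end

section
/- Let D ≥ 2 be an integer and let p_1, …, p_r be prime numbers with p_1 + 1 < p_2 < ⋯ < p_r. Then the field extension ℚ(p_1^{1/D}) of ℚ has degree D, and for every j with 2 ≤ j ≤ r, the degree of ℚ(p_1^{1/D}, …, p_j^{1/D}) over ℚ(p_1^{1/D}, …, p_{j−1}^{1/D}) equals D, where p^{1/D} denotes the positive real D-th root of p. -/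
open Polynomial

lemma aux_minpoly (D : ℕ) (hD : D ≠ 0) (β : ℝ) (hβ : 0 < β) (c : ℚ) (hc : β ^ D = (c:ℝ)) :
    ∃ c' : ℚ, minpoly ℚ β = X ^ (minpoly ℚ β).natDegree - C c' := by
  have hroot : aeval β (X ^ D - C c : ℚ[X]) = 0 := by simp [hc]
  have hint : IsIntegral ℚ β := ⟨X ^ D - C c, monic_X_pow_sub_C c hD, by simpa [aeval_def] using hroot⟩
  set m := minpoly ℚ β with hm
  have hmm : m.Monic := minpoly.monic hint
  have hdvd : m ∣ X ^ D - C c := minpoly.dvd _ _ hroot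
  have hd0 : m.natDegree ≠ 0 := (minpoly.natDegree_pos hint).ne'
  have hsp : (m.map (algebraMap ℚ ℂ)).Splits := IsAlgClosed.splits _
  have hnorm : ∀ z ∈ (m.map (algebraMap ℚ ℂ)).roots, ‖z‖ = β := by
    intro z hz
    rw [mem_roots_map hmm.ne_zero] at hz
    have h2 : aeval z (X ^ D - C c : ℚ[X]) = 0 := by
      obtain ⟨w, hw⟩ := hdvd
      rw [hw, map_mul, aeval_def, hz, zero_mul]
    have h3 : z ^ D = (c : ℂ) := by simpa [sub_eq_zero] using h2
    have h4 : ‖z‖ ^ D = β ^ D := by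
      rw [← norm_pow, h3]
      have : (c : ℂ) = ((β ^ D : ℝ) : ℂ) := by rw [hc]; simp
      rw [this, Complex.norm_real, Real.norm_of_nonneg (by positivity)]
    exact (pow_left_inj₀ (norm_nonneg _) hβ.le hD).1 h4
  have hcoef : |(m.coeff 0 : ℝ)| = β ^ m.natDegree := by
    have h1 := hsp.coeff_zero_eq_prod_roots_of_monic (hmm.map _)
    have h2 : ‖(m.map (algebraMap ℚ ℂ)).roots.prod‖ = β ^ m.natDegree := by
      have : ‖(m.map (algebraMap ℚ ℂ)).roots.prod‖ = ((m.map (algebraMap ℚ ℂ)).roots.map (fun z => ‖z‖)).prod := by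
        simpa using (Multiset.prod_hom (m.map (algebraMap ℚ ℂ)).roots (normHom : ℂ →*₀ ℝ)).symm
      rw [this, Multiset.map_congr rfl hnorm, Multiset.map_const', Multiset.prod_replicate,
        ← hsp.natDegree_eq_card_roots, natDegree_map]
    rw [← h2]
    have h3 := congrArg norm h1
    rw [norm_mul, norm_pow, norm_neg, norm_one, one_pow, one_mul, coeff_map] at h3
    rw [← h3]
    simp [Complex.norm_ratCast]
  refine ⟨|m.coeff 0|, ?_⟩
  symm
  refine Polynomial.eq_of_monic_of_dvd_of_natDegree_le hmm (monic_X_pow_sub_C _ hd0) (minpoly.dvd _ _ ?_) ?_ 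
  · simp [← hcoef]
  · rw [natDegree_X_pow_sub_C]

lemma aux_trace (D : ℕ) (hD : D ≠ 0) (L : IntermediateField ℚ ℝ) [FiniteDimensional ℚ L]
    (β : L) (hβ : 0 < (β : ℝ)) (c : ℚ) (hc : (β : ℝ) ^ D = (c:ℝ)) (hirr : ∀ q : ℚ, (β : ℝ) ≠ q) :
    Algebra.trace ℚ L β = 0 := by
  obtain ⟨c', h⟩ := aux_minpoly D hD β hβ c hc
  have hm : minpoly ℚ (β : ℝ) = minpoly ℚ β := by
    simpa using minpoly.algebraMap_eq (A := ℚ) (B := L) (B' := ℝ) (algebraMap L ℝ).injective β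
  rw [hm] at h
  have hint : IsIntegral ℚ β := Algebra.IsIntegral.isIntegral β
  have h0 := minpoly.natDegree_pos hint
  have h1 : (minpoly ℚ β).natDegree ≠ 1 := by
    intro h1
    rw [h1, pow_one] at h
    have := minpoly.aeval ℚ β
    rw [h] at this
    apply hirr c'
    have h5 : β = algebraMap ℚ L c' := by simpa [sub_eq_zero] using this
    rw [h5]; simp
  rw [trace_eq_finrank_mul_minpoly_nextCoeff, nextCoeff_of_natDegree_pos h0, h,
    natDegree_X_pow_sub_C, coeff_sub, coeff_X_pow, coeff_C, if_neg (by omega), if_neg (by omega)]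
  simp

lemma aux_val {j : ℕ} (q : Fin j → ℕ) (hq : ∀ i, (q i).Prime) (hinj : Function.Injective q)
    (e : Fin j → ℕ) (i : Fin j) : (∏ k, q k ^ e k).factorization (q i) = e i := by
  rw [Nat.factorization_prod (fun k _ => pow_ne_zero _ (hq k).ne_zero), Finsupp.finsetSum_apply]
  simp only [(hq _).factorization_pow]
  rw [Finset.sum_eq_single i]
  · simp
  · intro b _ hb
    exact Finsupp.single_eq_of_ne (fun h => hb (hinj h.symm))
  · simp

lemma aux_lower (D : ℕ) (hD : D ≠ 0) {j : ℕ} (q : Fin j → ℕ) (hq : ∀ i, (q i).Prime)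
    (hinj : Function.Injective q) (L : IntermediateField ℚ ℝ) [FiniteDimensional ℚ L]
    (hL : ∀ i, (q i : ℝ) ^ ((1:ℝ) / (D : ℝ)) ∈ L) : D ^ j ≤ Module.finrank ℚ L := by
  let α : Fin j → L := fun i => ⟨_, hL i⟩
  have hαpos : ∀ i, 0 < (α i : ℝ) := fun i =>
    Real.rpow_pos_of_pos (by exact_mod_cast (hq i).pos) _
  have hαD : ∀ i, (α i : ℝ) ^ D = q i := by
    intro i
    simp only [α, one_div]
    exact Real.rpow_inv_natCast_pow (by positivity) hD
  let m : (Fin j → Fin D) → L := fun e => ∏ i, α i ^ (e i : ℕ)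
  have hmr : ∀ e, (m e : ℝ) = ∏ i, (α i : ℝ) ^ (e i : ℕ) := fun e => by simp [m]
  have hmpos : ∀ e, 0 < (m e : ℝ) := fun e => by
    rw [hmr]; exact Finset.prod_pos fun i _ => pow_pos (hαpos i) _
  have hm0 : ∀ e, m e ≠ 0 := fun e h => by
    have := hmpos e
    rw [h] at this; simp at this
  have hmD : ∀ e, (m e : ℝ) ^ D = ((∏ i, q i ^ (e i : ℕ) : ℕ) : ℝ) := fun e => by
    rw [hmr, ← Finset.prod_pow]
    push_cast
    refine Finset.prod_congr rfl fun i _ => ?_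
    rw [← hαD, ← pow_mul, ← pow_mul, mul_comm]
  have hn0 : ∀ e : Fin j → Fin D, (∏ i, q i ^ (e i : ℕ)) ≠ 0 := fun e =>
    Finset.prod_ne_zero_iff.2 fun i _ => pow_ne_zero _ (hq i).ne_zero
  have hirr : ∀ e f, e ≠ f → ∀ x : ℚ, ((m e * (m f)⁻¹ : L) : ℝ) ≠ x := by
    intro e f hef x hx
    apply hef
    have h1 : (m e : ℝ) = x * m f := by
      rw [← hx]; push_cast
      rw [inv_mul_cancel_right₀ (hmpos f).ne']
    have h2 : ((∏ i, q i ^ (e i : ℕ) : ℕ) : ℚ) = x ^ D * ((∏ i, q i ^ (f i : ℕ) : ℕ) : ℚ) := by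
      have := congrArg (· ^ D) h1
      simp only [mul_pow, hmD] at this
      exact_mod_cast this
    have hx0 : x ≠ 0 := by
      rintro rfl
      have := hmpos e
      rw [h1] at this; simp at this
    funext i
    have := Fact.mk (hq i)
    have h3 := congrArg (padicValRat (q i)) h2
    rw [padicValRat.mul (pow_ne_zero _ hx0) (by exact_mod_cast hn0 f), padicValRat.pow,
      padicValRat.of_nat, padicValRat.of_nat, ← Nat.factorization_def _ (hq i),
      ← Nat.factorization_def _ (hq i), aux_val q hq hinj (fun i => (e i : ℕ)),
      aux_val q hq hinj (fun i => (f i : ℕ))] at h3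
    have he := (e i).2
    have hf := (f i).2
    have : padicValRat (q i) x = 0 := by
      generalize padicValRat (q i) x = v at h3
      by_contra hv
      rcases lt_or_gt_of_ne hv with h | h <;> nlinarith
    rw [this] at h3
    apply Fin.ext
    omega
  have hli : LinearIndependent ℚ m := by
    rw [Fintype.linearIndependent_iff]
    intro g hg f
    have h1 : ∑ e, g e • (m e * (m f)⁻¹) = 0 := by
      simp only [← smul_mul_assoc]
      rw [← Finset.sum_mul, hg, zero_mul]
    have h2 := congrArg (Algebra.trace ℚ L) h1
    rw [map_sum, Finset.sum_eq_single f, map_zero, map_smul, mul_inv_cancel₀ (hm0 f)] at h2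
    · have h3 : Algebra.trace ℚ L 1 = Module.finrank ℚ L := by
        simpa using Algebra.trace_algebraMap (R := ℚ) (S := L) (1:ℚ)
      rw [h3, smul_eq_mul] at h2
      have : (Module.finrank ℚ L : ℚ) ≠ 0 := by exact_mod_cast Module.finrank_pos.ne'
      exact (mul_eq_zero.1 h2).resolve_right this
    · intro e _ hef
      rw [map_smul, aux_trace D hD L (m e * (m f)⁻¹) ?_ 
        (((∏ i, q i ^ (e i : ℕ) : ℕ) : ℚ) / ((∏ i, q i ^ (f i : ℕ) : ℕ) : ℚ)) ?_ (hirr e f hef), smul_zero]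
      · push_cast
        exact mul_pos (hmpos e) (inv_pos.2 (hmpos f))
      · rw [Rat.cast_div, Rat.cast_natCast, Rat.cast_natCast, ← hmD, ← hmD, ← div_pow, div_eq_mul_inv]
        rfl
    · simp
  simpa using hli.fintype_card_le_finrank

theorem degree_of_adjoin_prime_roots (D : ℕ) (hD : 2 ≤ D)
    (r : ℕ) (hr : 1 ≤ r) (p : ℕ → ℕ)
    (hp : ∀ j : ℕ, 1 ≤ j → j ≤ r → (p j).Prime)
    (h12 : 2 ≤ r → p 1 + 1 < p 2)
    (hchain : ∀ j : ℕ, 2 ≤ j → j + 1 ≤ r → p j < p (j + 1))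
    (F : ℕ → IntermediateField ℚ ℝ)
    (hF : ∀ j : ℕ, F j = IntermediateField.adjoin ℚ
      {x : ℝ | ∃ i : ℕ, 1 ≤ i ∧ i ≤ j ∧ x = (p i : ℝ) ^ ((1 : ℝ) / (D : ℝ))}) :
    Module.finrank ℚ (F 1) = D ∧
    ∀ j : ℕ, 2 ≤ j → j ≤ r →
      ∃ h : F (j - 1) ≤ F j,
        Module.finrank (F (j - 1)) (IntermediateField.extendScalars h) = D := by
  have hD0 : D ≠ 0 := by omega
  have hstep : ∀ j, 1 ≤ j → j + 1 ≤ r → p j < p (j + 1) := by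
    intro j h1 h2
    rcases Nat.lt_or_ge 1 j with h | h
    · exact hchain j h h2
    · obtain rfl : j = 1 := by omega
      have := h12 h2
      show p 1 < p 2
      omega
  have hmono : ∀ i k, 1 ≤ i → i + 1 + k ≤ r → p i < p (i + 1 + k) := by
    intro i k hi
    induction k with
    | zero => exact hstep i hi
    | succ k ih =>
      intro h
      exact (ih (by omega)).trans (hstep (i + 1 + k) (by omega) h)
  have hαD : ∀ i, ((p i : ℝ) ^ ((1 : ℝ) / (D : ℝ))) ^ D = p i := by
    intro i
    rw [one_div]
    exact Real.rpow_inv_natCast_pow (by positivity) hD0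
  have hmem : ∀ i j, 1 ≤ i → i ≤ j → (p i : ℝ) ^ ((1 : ℝ) / (D : ℝ)) ∈ F j := by
    intro i j h1 h2
    rw [hF]
    exact IntermediateField.subset_adjoin _ _ ⟨i, h1, h2, rfl⟩
  have hle : ∀ j, F j ≤ F (j + 1) := by
    intro j
    rw [hF j, hF (j + 1)]
    refine IntermediateField.adjoin.mono _ _ _ ?_
    rintro x ⟨i, h1, h2, rfl⟩
    exact ⟨i, h1, by omega, rfl⟩
  have hfd : ∀ j, FiniteDimensional ℚ (F j) := by
    intro j
    rw [hF j]
    have hfin : {x : ℝ | ∃ i : ℕ, 1 ≤ i ∧ i ≤ j ∧ x = (p i : ℝ) ^ ((1 : ℝ) / (D : ℝ))}.Finite := by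
      refine ((Set.finite_Icc 1 j).image fun i => (p i : ℝ) ^ ((1 : ℝ) / (D : ℝ))).subset ?_
      rintro x ⟨i, h1, h2, rfl⟩
      exact ⟨i, ⟨h1, h2⟩, rfl⟩
    have := hfin.to_subtype
    refine IntermediateField.finiteDimensional_adjoin ?_
    rintro x ⟨i, h1, h2, rfl⟩
    refine ⟨X ^ D - C (p i : ℚ), monic_X_pow_sub_C _ hD0, ?_⟩
    simp only [eval₂_sub, eval₂_X_pow, eval₂_C, hαD]
    simp
  have hub : ∀ j, (F j).relfinrank (F (j + 1)) ≤ D := by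
    intro j
    rw [IntermediateField.relfinrank_eq_finrank_of_le (hle j)]
    set a : ℝ := (p (j + 1) : ℝ) ^ ((1 : ℝ) / (D : ℝ)) with ha
    have hmon := monic_X_pow_sub_C ((p (j + 1) : F j)) hD0
    have hz : aeval a (X ^ D - C (p (j + 1) : F j)) = 0 := by
      simp only [map_sub, map_pow, aeval_X, aeval_C, ha, hαD]
      simp
    have hint : IsIntegral (F j) a := ⟨_, hmon, hz⟩
    have heq : IntermediateField.extendScalars (hle j) = IntermediateField.adjoin (F j) {a} := by
      apply le_antisymm
      · rw [IntermediateField.extendScalars_le_iff, hF (j + 1), IntermediateField.adjoin_le_iff]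
        rintro x ⟨i, h1, h2, rfl⟩
        rcases Nat.lt_or_ge j i with h | h
        · obtain rfl : i = j + 1 := by omega
          exact IntermediateField.mem_adjoin_simple_self (F j) a
        · exact (IntermediateField.adjoin (F j) {a}).algebraMap_mem ⟨_, hmem i j h1 h⟩
      · rw [IntermediateField.adjoin_simple_le_iff]
        exact hmem (j + 1) (j + 1) (by omega) le_rfl
    rw [heq, IntermediateField.adjoin.finrank hint]
    calc _ ≤ (X ^ D - C (p (j + 1) : F j)).natDegree :=
          natDegree_le_of_dvd (minpoly.dvd _ _ hz) hmon.ne_zero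
      _ = D := natDegree_X_pow_sub_C
  have hmul : ∀ j, Module.finrank ℚ (F j) * (F j).relfinrank (F (j + 1))
      = Module.finrank ℚ (F (j + 1)) := fun j =>
    IntermediateField.finrank_bot_mul_relfinrank (hle j)
  have hF0 : Module.finrank ℚ (F 0) = 1 := by
    have : F 0 = ⊥ := by
      rw [hF 0, IntermediateField.adjoin_eq_bot_iff]
      rintro x ⟨i, h1, h2, rfl⟩
      omega
    rw [this, IntermediateField.finrank_bot]
  have hupper : ∀ j, Module.finrank ℚ (F j) ≤ D ^ j := by
    intro j
    induction j with
    | zero => simp [hF0]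
    | succ j ih =>
      rw [← hmul, pow_succ]
      exact Nat.mul_le_mul ih (hub j)
  have hexact : ∀ j, j ≤ r → Module.finrank ℚ (F j) = D ^ j := by
    intro j hj
    refine le_antisymm (hupper j) ?_
    have := hfd j
    refine aux_lower D hD0 (fun i : Fin j => p (i + 1)) (fun i => hp _ (by omega) (by omega)) ?_
      (F j) (fun i => hmem _ _ (by omega) (by omega))
    refine StrictMono.injective fun i k hik => ?_
    obtain ⟨d, hd⟩ := Nat.exists_eq_add_of_lt (Fin.lt_def.1 hik)
    have h := hmono (i + 1) d (by omega) (by omega)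
    have e : (i : ℕ) + 1 + 1 + d = k + 1 := by omega
    rw [e] at h
    exact h
  refine ⟨by simpa using hexact 1 hr, ?_⟩
  intro j h2 hj
  obtain ⟨k, rfl⟩ : ∃ k, j = k + 1 := ⟨j - 1, by omega⟩
  refine ⟨hle k, ?_⟩
  have h := hmul k
  rw [hexact k (by omega), hexact (k + 1) hj, pow_succ] at h
  have h' := Nat.eq_of_mul_eq_mul_left (by positivity) h
  rw [IntermediateField.relfinrank_eq_finrank_of_le (hle k)] at h'
  exact h'
end
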